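/- For the Gaussian band ensemble, the normalized second correlation function of characteristic polynomials admits the transfer-operator representation Θ̃(z₁,z₂) = ∫_{(H₂)^N} e^{f(Q₁)} (∏_{j=1}^{N−1} 𝒦_ζ(Q_j,Q_{j+1})) e^{f(Q_N)} ∏_{j=1}^{N} dQ_j = (𝒦_ζ^{N−1} g, g), where g(Q) = e^{f(Q)} and the bilinear pairing and N-fold integral are over the space H₂ of 2×2 complex matrices. -/

import Mathlib

open MeasureTheory Matrix Filter

noncomputable section

/-- The matrix of `f ↦ -Δf`, where `Δ` is the discrete Laplacian on `{1,…,N}`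
with Neumann boundary conditions. -/
def neumannMinusLap (N : ℕ) : Matrix (Fin N) (Fin N) ℝ :=
  Matrix.of fun j k =>
    if j = k then (if (j : ℕ) = 0 ∨ (j : ℕ) = N - 1 then 1 else 2)
    else if (j : ℕ) + 1 = (k : ℕ) ∨ (k : ℕ) + 1 = (j : ℕ) then -1 else 0

/-- The band profile `J = (-W²Δ + 1)⁻¹`. -/
def Jmat (N W : ℕ) : Matrix (Fin N) (Fin N) ℝ :=
  ((W : ℝ) ^ 2 • neumannMinusLap N + 1)⁻¹

/-- The Gaussian density of the non-Hermitian band matrix ensemble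
`∏_{j,k} (π J_{jk})⁻¹ exp(-|H_{jk}|²/J_{jk})` with respect to Lebesgue measure
on the entries. -/
def bandDensity (N W : ℕ) (H : Fin N → Fin N → ℂ) : ℝ :=
  ∏ j : Fin N, ∏ k : Fin N,
    (Real.pi * Jmat N W j k)⁻¹ * Real.exp (-‖H j k‖ ^ 2 / Jmat N W j k)

/-- The second correlation function of characteristic polynomials
`Θ(z₁,z₂) = E[det(H-z₁)·conj(det(H-z₁))·det(H-z₂)·conj(det(H-z₂))]
          = E[|det(H-z₁)|²·|det(H-z₂)|²]` for the Gaussian band ensemble. -/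
def Theta (N W : ℕ) (z₁ z₂ : ℂ) : ℝ :=
  ∫ H : Fin N → Fin N → ℂ,
    ‖(Matrix.of H - z₁ • (1 : Matrix (Fin N) (Fin N) ℂ)).det‖ ^ 2 *
    ‖(Matrix.of H - z₂ • (1 : Matrix (Fin N) (Fin N) ℂ)).det‖ ^ 2 *
    bandDensity N W H
/-- `u_* = (1-|z|²)^{1/2}`. -/
def ustar (z : ℂ) : ℝ := Real.sqrt (1 - ‖z‖ ^ 2)

/-- `α = u_*(2 + u_*²W^{-2})^{1/2}`. -/
def alphaC (W : ℕ) (z : ℂ) : ℝ := ustar z * Real.sqrt (2 + ustar z ^ 2 / (W : ℝ) ^ 2)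

/-- `λ_* = 1 - W^{-1}(α - u_*²W^{-1})`. -/
def lamstar (W : ℕ) (z : ℂ) : ℝ :=
  1 - (W : ℝ)⁻¹ * (alphaC W z - ustar z ^ 2 / (W : ℝ))

/-- The normalizing constant `C_{N,W} = e^{-2Nu_*²} π^{-4N} (det J)^{-4}`. -/
def CNW (N W : ℕ) (z : ℂ) : ℝ :=
  Real.exp (-2 * (N : ℝ) * ustar z ^ 2) * (Real.pi ^ (4 * N))⁻¹ * ((Jmat N W).det ^ 4)⁻¹

/-- The normalized second correlation function
`Θ̃(z₁,z₂) = (π²W²λ_*⁻¹)^{2(N-1)} C_{N,W}⁻¹ Θ(z₁,z₂)`. -/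
def ThetaTilde (N W : ℕ) (z z₁ z₂ : ℂ) : ℝ :=
  (Real.pi ^ 2 * (W : ℝ) ^ 2 * (lamstar W z)⁻¹) ^ (2 * (N - 1)) * (CNW N W z)⁻¹ *
    Theta N W z₁ z₂
/-- The 4×4 block matrix `𝒬 = [[ẑ, iQ], [iQ*, ẑ*]]` with `ẑ = diag(z₁,z₂)` and
`ẑ* = diag(conj z₁, conj z₂)`. -/
def Qcal (z₁ z₂ : ℂ) (Q : Matrix (Fin 2) (Fin 2) ℂ) :
    Matrix (Fin 2 ⊕ Fin 2) (Fin 2 ⊕ Fin 2) ℂ :=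
  Matrix.fromBlocks (Matrix.diagonal ![z₁, z₂]) (Complex.I • Q)
    (Complex.I • Qᴴ) (Matrix.diagonal ![starRingEnd ℂ z₁, starRingEnd ℂ z₂])

/-- `f(Q) = ½(-Tr QQ* + log det 𝒬 + 2u_*²)`. -/
def fQ (z z₁ z₂ : ℂ) (Q : Matrix (Fin 2) (Fin 2) ℂ) : ℂ :=
  (1 / 2) * (-(Q * Qᴴ).trace + Complex.log (Qcal z₁ z₂ Q).det + 2 * (ustar z : ℂ) ^ 2)

/-- The kernel of the transfer operator `𝒦_ζ`:
`𝒦_ζ(Q,Q') = π⁴W⁴λ_*⁻² exp{-W² Tr (Q-Q')(Q-Q')* + f(Q) + f(Q')}`. -/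
def Kker (W : ℕ) (z z₁ z₂ : ℂ) (Q Q' : Matrix (Fin 2) (Fin 2) ℂ) : ℂ :=
  (Real.pi ^ 4 * (W : ℝ) ^ 4 * ((lamstar W z) ^ 2)⁻¹ : ℝ) *
    Complex.exp (-(W : ℂ) ^ 2 * ((Q - Q') * (Q - Q')ᴴ).trace + fQ z z₁ z₂ Q + fQ z z₁ z₂ Q')

/-- The transfer operator `𝒦_ζ` acting on functions on the space of 2×2 complex
matrices. -/
def Kop (W : ℕ) (z z₁ z₂ : ℂ) (h : (Fin 2 → Fin 2 → ℂ) → ℂ) : (Fin 2 → Fin 2 → ℂ) → ℂ :=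
  fun Q => ∫ Q' : Fin 2 → Fin 2 → ℂ, Kker W z z₁ z₂ (Matrix.of Q) (Matrix.of Q') * h Q'

section partA

/-- constant-coefficient derivation in direction `w` -/
def dirD {τ : Type*} [Fintype τ] (w : τ → ℂ) :
    Derivation ℂ (MvPolynomial τ ℂ) (MvPolynomial τ ℂ) :=
  ∑ β, w β • MvPolynomial.pderiv β

lemma dirD_apply {τ : Type*} [Fintype τ] (w : τ → ℂ) (P : MvPolynomial τ ℂ) :
    dirD w P = ∑ β, w β • MvPolynomial.pderiv β P := by
  have h := congrFun (map_sum Derivation.coeFnAddMonoidHom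
    (fun β => w β • MvPolynomial.pderiv (R := ℂ) β) Finset.univ) P
  rw [Finset.sum_apply] at h
  exact h

lemma dirD_X {τ : Type*} [Fintype τ] (w : τ → ℂ) (α : τ) :
    dirD w (MvPolynomial.X α) = MvPolynomial.C (w α) := by
  classical
  rw [dirD_apply, Finset.sum_eq_single α]
  · simp [MvPolynomial.smul_eq_C_mul]
  · intro β _ h
    rw [MvPolynomial.pderiv_X_of_ne h.symm, smul_zero]
  · simp

lemma dirD_comm {τ : Type*} [Fintype τ] (v w : τ → ℂ) (P : MvPolynomial τ ℂ) :
    dirD v (dirD w P) = dirD w (dirD v P) := by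
  have : ⁅dirD v, dirD w⁆ = 0 := by
    apply MvPolynomial.derivation_ext
    intro i
    rw [Derivation.commutator_apply, dirD_X, dirD_X]
    simp [MvPolynomial.derivation_C]
  have h := congrArg (fun D => D P) this
  simp only [Derivation.commutator_apply] at h
  exact sub_eq_zero.1 h

lemma dirD_single {τ : Type*} [Fintype τ] [DecidableEq τ] (β : τ) (P : MvPolynomial τ ℂ) :
    dirD (Pi.single β 1) P = MvPolynomial.pderiv β P := by
  rw [dirD_apply, Finset.sum_eq_single β]
  · simp
  · intro b _ h; simp [h]
  · simp

lemma pderiv_comm' {τ : Type*} [Fintype τ] (a b : τ) (P : MvPolynomial τ ℂ) :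
    MvPolynomial.pderiv a (MvPolynomial.pderiv b P) =
      MvPolynomial.pderiv b (MvPolynomial.pderiv a P) := by
  classical
  rw [← dirD_single a, ← dirD_single b, ← dirD_single b, ← dirD_single a, dirD_comm]

lemma homog_zero_eq_C {τ : Type*} {P : MvPolynomial τ ℂ} (h : P.IsHomogeneous 0) :
    P = MvPolynomial.C (MvPolynomial.coeff 0 P) :=
  MvPolynomial.totalDegree_eq_zero_iff_eq_C.1 (Nat.le_zero.1 h.totalDegree_le)

lemma dirD_homog {τ : Type*} [Fintype τ] (w : τ → ℂ) {P : MvPolynomial τ ℂ} {n : ℕ}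
    (h : P.IsHomogeneous n) : (dirD w P).IsHomogeneous (n - 1) := by
  rw [dirD_apply]
  apply MvPolynomial.IsHomogeneous.sum
  intro i _
  rw [MvPolynomial.smul_eq_C_mul]
  exact (h.pderiv).C_mul _

/-- the generalised Laplacian -/
def gLap {τ : Type*} [Fintype τ] (w : τ → τ → ℂ) (P : MvPolynomial τ ℂ) : MvPolynomial τ ℂ :=
  ∑ α, dirD (w α) (MvPolynomial.pderiv α P)

lemma gLap_homog {τ : Type*} [Fintype τ] (w : τ → τ → ℂ) {P : MvPolynomial τ ℂ} {n : ℕ}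
    (h : P.IsHomogeneous n) : (gLap w P).IsHomogeneous (n - 1 - 1) :=
  MvPolynomial.IsHomogeneous.sum _ _ _ fun _ _ => dirD_homog _ h.pderiv

lemma gLap_comm {τ : Type*} [Fintype τ] (v w : τ → τ → ℂ) (P : MvPolynomial τ ℂ) :
    gLap v (gLap w P) = gLap w (gLap v P) := by
  classical
  simp only [gLap, map_sum]
  rw [Finset.sum_comm]
  refine Finset.sum_congr rfl fun a _ => Finset.sum_congr rfl fun b _ => ?_
  simp only [← dirD_single]
  rw [dirD_comm (Pi.single b 1) (w a), dirD_comm (v b) (w a), dirD_comm (Pi.single b 1),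
    dirD_comm (v b) (Pi.single a 1)]

/-- a Gaussian-type functional is determined on `F` of degree `d` by its Laplacian -/
lemma gauss_unique_homog {τ : Type*} [Fintype τ] (w₁ w₂ : τ → τ → ℂ)
    (E₁ E₂ : MvPolynomial τ ℂ →ₗ[ℂ] ℂ) (h1 : E₁ 1 = 1) (h2 : E₂ 1 = 1)
    (hs1 : ∀ α G, E₁ (MvPolynomial.X α * G) = E₁ (dirD (w₁ α) G))
    (hs2 : ∀ α G, E₂ (MvPolynomial.X α * G) = E₂ (dirD (w₂ α) G)) (d : ℕ) :
    ∀ F : MvPolynomial τ ℂ, F.IsHomogeneous d → gLap w₁ F = gLap w₂ F → E₁ F = E₂ F := by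
  induction d using Nat.strong_induction_on with
  | _ d ih =>
    intro F hF hL
    rcases Nat.eq_zero_or_pos d with rfl | hd
    · rw [homog_zero_eq_C hF] 
      rw [← mul_one (MvPolynomial.C _), ← MvPolynomial.smul_eq_C_mul, map_smul, map_smul, h1, h2]
    · have key : ∀ (E : MvPolynomial τ ℂ →ₗ[ℂ] ℂ) (w : τ → τ → ℂ),
          (∀ α G, E (MvPolynomial.X α * G) = E (dirD (w α) G)) → (d : ℂ) * E F = E (gLap w F) := by
        intro E w hs
        have := hF.sum_X_mul_pderiv
        rw [gLap, map_sum, ← Finset.sum_congr rfl fun α _ => hs α _, ← map_sum, this,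
          map_nsmul, nsmul_eq_mul]
      have e1 := key E₁ w₁ hs1
      have e2 := key E₂ w₂ hs2
      have e3 : E₁ (gLap w₁ F) = E₂ (gLap w₁ F) := by
        apply ih (d - 1 - 1) (by omega) _ (gLap_homog _ hF)
        rw [gLap_comm w₂ w₁, hL]
      rw [e3, hL, ← e2] at e1
      exact mul_left_cancel₀ (by exact_mod_cast hd.ne') e1

lemma gLap_add {τ : Type*} [Fintype τ] (w : τ → τ → ℂ) (P Q : MvPolynomial τ ℂ) :
    gLap w (P + Q) = gLap w P + gLap w Q := by
  simp [gLap, Finset.sum_add_distrib]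

lemma gLap_sum {τ κ : Type*} [Fintype τ] (w : τ → τ → ℂ) (s : Finset κ)
    (P : κ → MvPolynomial τ ℂ) :
    gLap w (∑ i ∈ s, P i) = ∑ i ∈ s, gLap w (P i) := by
  simp only [gLap, map_sum]
  rw [Finset.sum_comm]

lemma homogComp_pderiv {τ : Type*} [Fintype τ] (α : τ) (n : ℕ) (P : MvPolynomial τ ℂ) :
    MvPolynomial.homogeneousComponent n (MvPolynomial.pderiv α P) =
      MvPolynomial.pderiv α (MvPolynomial.homogeneousComponent (n + 1) P) := by
  classical
  ext m
  rw [MvPolynomial.coeff_homogeneousComponent, MvPolynomial.coeff_pderiv,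
    MvPolynomial.coeff_pderiv, MvPolynomial.coeff_homogeneousComponent]
  simp [map_add]

lemma homogComp_dirD {τ : Type*} [Fintype τ] (w : τ → ℂ) (n : ℕ) (P : MvPolynomial τ ℂ) :
    MvPolynomial.homogeneousComponent n (dirD w P) =
      dirD w (MvPolynomial.homogeneousComponent (n + 1) P) := by
  simp [dirD_apply, map_sum, homogComp_pderiv]

lemma homogComp_gLap {τ : Type*} [Fintype τ] (w : τ → τ → ℂ) (n : ℕ) (P : MvPolynomial τ ℂ) :
    MvPolynomial.homogeneousComponent n (gLap w P) =
      gLap w (MvPolynomial.homogeneousComponent (n + 2) P) := by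
  simp [gLap, map_sum, homogComp_dirD, homogComp_pderiv]

lemma gLap_low {τ : Type*} [Fintype τ] (w : τ → τ → ℂ) {n : ℕ} (hn : n < 2)
    {P : MvPolynomial τ ℂ} (h : P.IsHomogeneous n) : gLap w P = 0 := by
  classical
  unfold gLap
  refine Finset.sum_eq_zero fun α _ => ?_
  have : (MvPolynomial.pderiv α P).IsHomogeneous 0 := by
    have := h.pderiv (i := α)
    rwa [show n - 1 = 0 by omega] at this
  rw [homog_zero_eq_C this]
  exact MvPolynomial.derivation_C _ _

lemma gauss_unique {τ : Type*} [Fintype τ] (w₁ w₂ : τ → τ → ℂ)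
    (E₁ E₂ : MvPolynomial τ ℂ →ₗ[ℂ] ℂ) (h1 : E₁ 1 = 1) (h2 : E₂ 1 = 1)
    (hs1 : ∀ α G, E₁ (MvPolynomial.X α * G) = E₁ (dirD (w₁ α) G))
    (hs2 : ∀ α G, E₂ (MvPolynomial.X α * G) = E₂ (dirD (w₂ α) G))
    (F : MvPolynomial τ ℂ) (hL : gLap w₁ F = gLap w₂ F) : E₁ F = E₂ F := by
  rw [← MvPolynomial.sum_homogeneousComponent F, map_sum, map_sum]
  refine Finset.sum_congr rfl fun i _ => ?_
  have hh := MvPolynomial.homogeneousComponent_isHomogeneous i F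
  apply gauss_unique_homog w₁ w₂ E₁ E₂ h1 h2 hs1 hs2 i _ hh
  rcases lt_or_ge i 2 with h | h
  · rw [gLap_low _ h hh, gLap_low _ h hh]
  · obtain ⟨k, rfl⟩ := Nat.exists_eq_add_of_le' h
    rw [← homogComp_gLap, ← homogComp_gLap, hL]

/-- the generic determinant with constant shift -/
def detPoly {ι : Type*} [Fintype ι] [DecidableEq ι] (D : Matrix ι ι ℂ) :
    MvPolynomial (ι × ι) ℂ :=
  (Matrix.of fun i j => MvPolynomial.C (D i j) + MvPolynomial.X (i, j)).det

lemma eval_detPoly {ι : Type*} [Fintype ι] [DecidableEq ι] (D : Matrix ι ι ℂ)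
    (x : ι × ι → ℂ) :
    MvPolynomial.eval x (detPoly D) = (D + Matrix.of fun i j => x (i, j)).det := by
  rw [detPoly, RingHom.map_det]
  congr 1
  ext i j
  simp

lemma pderiv_prod_entry {ι : Type*} [Fintype ι] [DecidableEq ι] (D : Matrix ι ι ℂ)
    (s : Finset ι) (σ : ι → ι) (p q : ι) :
    MvPolynomial.pderiv (p, q)
      (∏ i ∈ s, (MvPolynomial.C (D (σ i) i) + MvPolynomial.X (σ i, i) : MvPolynomial (ι × ι) ℂ)) =
    if q ∈ s ∧ σ q = p then
      ∏ i ∈ s.erase q, (MvPolynomial.C (D (σ i) i) + MvPolynomial.X (σ i, i)) else 0 := by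
  have : ∀ i, MvPolynomial.pderiv (p, q)
      (MvPolynomial.C (D (σ i) i) + MvPolynomial.X (σ i, i) : MvPolynomial (ι × ι) ℂ) =
      if i = q ∧ σ q = p then 1 else 0 := by
    intro i
    rw [map_add, MvPolynomial.pderiv_C, zero_add, MvPolynomial.pderiv_X, Pi.single_apply]
    refine if_congr ?_ rfl rfl
    rw [Prod.mk.injEq]
    constructor
    · rintro ⟨h, rfl⟩; exact ⟨rfl, h⟩
    · rintro ⟨rfl, h⟩; exact ⟨h, rfl⟩
  induction s using Finset.induction_on with
  | empty => simp
  | insert a s ha ih =>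
    rw [Finset.prod_insert ha, Derivation.leibniz, ih, this, smul_eq_mul, smul_eq_mul]
    by_cases h : σ q = p
    · by_cases haq : a = q
      · subst haq
        simp [h, ha]
      · have h1 : q ≠ a := fun h => haq h.symm
        by_cases hqs : q ∈ s
        · simp [h, haq, h1, hqs]
          rw [Finset.erase_insert_of_ne haq, Finset.prod_insert (by simp [ha])]
        · simp [haq, h1, hqs]
    · simp [h]

lemma pderiv_pderiv_detPoly {ι : Type*} [Fintype ι] [DecidableEq ι] (D : Matrix ι ι ℂ)
    {p q r s : ι} (hqs : q ≠ s) :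
    MvPolynomial.pderiv (r, s) (MvPolynomial.pderiv (p, q) (detPoly D)) =
      - MvPolynomial.pderiv (r, q) (MvPolynomial.pderiv (p, s) (detPoly D)) := by
  have expand : ∀ q s : ι, q ≠ s → MvPolynomial.pderiv (r, s) (MvPolynomial.pderiv (p, q) (detPoly D)) =
      ∑ σ : Equiv.Perm ι, if σ q = p ∧ σ s = r then
        ((Equiv.Perm.sign σ : ℤ) : MvPolynomial (ι × ι) ℂ) *
        ∏ i ∈ (Finset.univ.erase q).erase s,
          (MvPolynomial.C (D (σ i) i) + MvPolynomial.X (σ i, i)) else 0 := by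
    intro q s hqs
    rw [detPoly, Matrix.det_apply', map_sum, map_sum]
    refine Finset.sum_congr rfl fun σ _ => ?_
    have hz : ∀ (n : ℤ) (a : ι × ι) (P : MvPolynomial (ι × ι) ℂ),
        MvPolynomial.pderiv a ((n : MvPolynomial (ι × ι) ℂ) * P) = n * MvPolynomial.pderiv a P := by
      intro n a P
      rw [← zsmul_eq_mul, map_zsmul, zsmul_eq_mul]
    simp only [Matrix.of_apply]
    rw [hz, pderiv_prod_entry, hz]
    by_cases h1 : σ q = p
    · by_cases h2 : σ s = r
      · simp [h1, h2, pderiv_prod_entry, hqs.symm]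
      · simp [h1, h2, pderiv_prod_entry]
    · simp [h1]
  rw [expand q s hqs, expand s q hqs.symm, ← Finset.sum_neg_distrib]
  refine Fintype.sum_equiv (Equiv.mulRight (Equiv.swap q s)) _ _ fun σ => ?_
  simp only [Equiv.coe_mulRight, Equiv.Perm.mul_apply, Equiv.swap_apply_left, Equiv.swap_apply_right]
  by_cases h : σ q = p ∧ σ s = r
  · rw [if_pos h, if_pos h, Equiv.Perm.sign_mul, Equiv.Perm.sign_swap hqs, Finset.erase_right_comm]
    simp only [mul_neg, mul_one, Units.val_neg, Int.cast_neg, neg_mul, neg_neg]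
    congr 1
    refine Finset.prod_congr rfl fun i hi => ?_
    simp only [Finset.mem_erase] at hi
    rw [Equiv.swap_apply_of_ne_of_ne hi.1 hi.2.1]
  · rw [if_neg h, if_neg (by tauto), neg_zero]
end partA

section partB

section GaussV
variable {V : Type*} [NormedAddCommGroup V] [NormedSpace ℝ V] [FiniteDimensional ℝ V]

lemma form_coercive (B : V →ₗ[ℝ] V →ₗ[ℝ] ℝ) (hpos : ∀ v, v ≠ 0 → 0 < B v v) :
    ∃ c > 0, ∀ v, c * ‖v‖ ^ 2 ≤ B v v := by
  have hcont : Continuous fun v => B v v := by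
    have : Continuous fun v => (LinearMap.toContinuousLinearMap (B v)) v := by
      let B' : V →L[ℝ] V →L[ℝ] ℝ :=
        LinearMap.toContinuousLinearMap
          ((LinearMap.toContinuousLinearMap : (V →ₗ[ℝ] ℝ) ≃ₗ[ℝ] (V →L[ℝ] ℝ)).toLinearMap ∘ₗ B)
      exact B'.continuous.clm_apply continuous_id
    simpa using this
  rcases (Metric.sphere (0 : V) 1).eq_empty_or_nonempty with he | hne
  · refine ⟨1, one_pos, fun v => ?_⟩
    by_cases hv : v = 0
    · simp [hv]
    · exfalso
      have : (‖v‖⁻¹ • v) ∈ Metric.sphere (0 : V) 1 := by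
        simp [norm_smul, hv]
      rw [he] at this
      exact this
  · obtain ⟨x, hx, hmin⟩ := (isCompact_sphere (0 : V) 1).exists_isMinOn hne hcont.continuousOn
    have hx0 : x ≠ 0 := by
      rintro rfl
      simp at hx
    refine ⟨B x x, hpos x hx0, fun v => ?_⟩
    by_cases hv : v = 0
    · simp [hv]
    · have hm : (‖v‖⁻¹ • v) ∈ Metric.sphere (0 : V) 1 := by
        simp [norm_smul, hv]
      have h := hmin hm
      simp only [Set.mem_ofPred_eq, map_smul, LinearMap.smul_apply, smul_eq_mul] at h
      have hn : 0 < ‖v‖ := norm_pos_iff.2 hv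
      calc B x x * ‖v‖ ^ 2 ≤ (‖v‖⁻¹ * (‖v‖⁻¹ * B v v)) * ‖v‖ ^ 2 := by gcongr
        _ = B v v := by field_simp

lemma integrable_gauss_growth [MeasurableSpace V] [BorelSpace V] (μ : Measure V)
    [μ.IsAddHaarMeasure] {F : Type*} [NormedAddCommGroup F] (f : V → F)
    (hf : AEStronglyMeasurable f μ) (C c : ℝ) (hc : 0 < c) (k : ℕ)
    (hb : ∀ v, ‖f v‖ ≤ C * (1 + ‖v‖) ^ k * Real.exp (-(c * ‖v‖ ^ 2))) : Integrable f μ := by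
  set r : ℕ := Module.finrank ℝ V + 1 with hr
  have hintg := integrable_one_add_norm (E := V) (μ := μ) (r := (r : ℝ)) (by rw [hr]; push_cast; linarith)
  -- boundedness of `(1+x)^(k+r) e^{-c x²}`
  have hC : 0 ≤ C := by
    have := (norm_nonneg _).trans (hb 0)
    simpa using this
  obtain ⟨M, hM⟩ : ∃ M : ℝ, ∀ x : ℝ, 0 ≤ x → (1 + x) ^ (k + r) * Real.exp (-(c * x ^ 2)) ≤ M := by
    have h1 : ∀ x : ℝ, 0 ≤ x → (1 + x) ≤ Real.exp (1 + c⁻¹ * (k + r + 1)) * Real.exp (c / (k + r + 1) * x ^ 2) := by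
      intro x hx
      rw [← Real.exp_add]
      refine le_trans ?_ (Real.add_one_le_exp _)
      have hk : (0 : ℝ) < k + r + 1 := by positivity
      set m : ℝ := (k : ℝ) + r + 1
      have : x ≤ c⁻¹ * m + c / m * x ^ 2 := by
        have h2 : c⁻¹ * m + c / m * x ^ 2 - x = c⁻¹ * m * ((1 - c / m * x) ^ 2 + c / m * x) := by
          field_simp; ring
        have h3 : 0 ≤ c⁻¹ * m * ((1 - c / m * x) ^ 2 + c / m * x) := by positivity
        linarith
      linarith
    refine ⟨Real.exp (1 + c⁻¹ * (k + r + 1)) ^ (k + r), fun x hx => ?_⟩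
    calc (1 + x) ^ (k + r) * Real.exp (-(c * x ^ 2))
        ≤ (Real.exp (1 + c⁻¹ * (k + r + 1)) * Real.exp (c / (k + r + 1) * x ^ 2)) ^ (k + r)
            * Real.exp (-(c * x ^ 2)) := by
          have := h1 x hx
          gcongr
      _ = Real.exp (1 + c⁻¹ * (k + r + 1)) ^ (k + r) *
            Real.exp ((k + r : ℕ) * (c / (k + r + 1) * x ^ 2) + -(c * x ^ 2)) := by
          rw [mul_pow, Real.exp_add (_ * _) (-_), Real.exp_nat_mul]; ring
      _ ≤ Real.exp (1 + c⁻¹ * (k + r + 1)) ^ (k + r) * 1 := by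
          gcongr
          rw [Real.exp_le_one_iff]
          have : ((k + r : ℕ) : ℝ) * (c / (k + r + 1) * x ^ 2) + -(c * x ^ 2)
              = - (c / (k + r + 1) * x ^ 2) := by
            push_cast; field_simp; ring
          rw [this]
          have : 0 ≤ c / (k + r + 1 : ℝ) * x ^ 2 := by positivity
          linarith
      _ = _ := mul_one _
  refine (hintg.const_mul (C * M)).mono' hf (Eventually.of_forall fun v => ?_)
  refine (hb v).trans ?_
  have hp : 0 < (1 + ‖v‖) ^ r := by positivity
  rw [Real.rpow_neg (by positivity), Real.rpow_natCast, ← div_eq_mul_inv, le_div_iff₀ hp]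
  have := mul_le_mul_of_nonneg_left (hM ‖v‖ (norm_nonneg _)) hC
  calc _ = C * ((1 + ‖v‖) ^ (k + r) * Real.exp (-(c * ‖v‖ ^ 2))) := by rw [pow_add]; ring
    _ ≤ _ := this

variable {τ : Type*} [Fintype τ] (X : V →L[ℝ] (τ → ℂ))

lemma poly_growth (G : MvPolynomial τ ℂ) :
    ∃ C : ℝ, 0 ≤ C ∧ ∃ k : ℕ, ∀ v, ‖MvPolynomial.eval (X v) G‖ ≤ C * (1 + ‖v‖) ^ k := by
  induction G using MvPolynomial.induction_on with
  | C a => exact ⟨‖a‖, norm_nonneg _, 0, fun v => by simp⟩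
  | add p q hp hq =>
    obtain ⟨C, hC, k, h⟩ := hp
    obtain ⟨C', hC', k', h'⟩ := hq
    refine ⟨C + C', by positivity, k + k', fun v => ?_⟩
    rw [map_add, add_mul]
    have h1 : (1 : ℝ) ≤ 1 + ‖v‖ := by linarith [norm_nonneg v]
    refine (norm_add_le _ _).trans (add_le_add ((h v).trans ?_) ((h' v).trans ?_))
    · gcongr
      omega
    · gcongr
      omega
  | mul_X p α hp =>
    obtain ⟨C, hC, k, h⟩ := hp
    refine ⟨C * ‖X‖, by positivity, k + 1, fun v => ?_⟩
    rw [map_mul, norm_mul, MvPolynomial.eval_X]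
    have h2 : ‖X v α‖ ≤ ‖X‖ * (1 + ‖v‖) := by
      refine (norm_le_pi_norm (X v) α).trans ((X.le_opNorm v).trans ?_)
      have := norm_nonneg X
      gcongr
      linarith
    calc _ ≤ (C * (1 + ‖v‖) ^ k) * (‖X‖ * (1 + ‖v‖)) :=
          mul_le_mul (h v) h2 (norm_nonneg _) (by positivity)
      _ = _ := by ring

lemma poly_lineDeriv (G : MvPolynomial τ ℂ) (v w : V) :
    HasLineDerivAt ℝ (fun v => MvPolynomial.eval (X v) G)
      (MvPolynomial.eval (X v) (dirD (X w) G)) v w := by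
  unfold HasLineDerivAt
  induction G using MvPolynomial.induction_on with
  | C a =>
    simp only [MvPolynomial.eval_C]
    rw [MvPolynomial.derivation_C, map_zero]
    exact hasDerivAt_const _ _
  | add p q hp hq =>
    simp only [map_add] at *
    exact hp.add hq
  | mul_X p α hp =>
    simp only [map_mul, MvPolynomial.eval_X, Derivation.leibniz, dirD_X, smul_eq_mul, map_add,
      MvPolynomial.eval_C]
    have hX : HasDerivAt (fun t : ℝ => X (v + t • w) α) (X w α) 0 := by
      have : (fun t : ℝ => X (v + t • w) α) = fun t : ℝ => X v α + t • X w α := by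
        funext t
        simp
      rw [this]
      simpa using ((hasDerivAt_id (0 : ℝ)).smul_const (X w α)).const_add (X v α)
    have := hp.mul hX
    simp only [zero_smul, add_zero] at this
    simp only [map_add, map_smul] at this ⊢
    refine this.congr_deriv ?_
    ring

variable (B : V →ₗ[ℝ] V →ₗ[ℝ] ℝ)

lemma form_cont : Continuous fun v => B v v := by
  let B' : V →L[ℝ] V →L[ℝ] ℝ :=
    LinearMap.toContinuousLinearMap
      ((LinearMap.toContinuousLinearMap : (V →ₗ[ℝ] ℝ) ≃ₗ[ℝ] (V →L[ℝ] ℝ)).toLinearMap ∘ₗ B)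
  have : Continuous fun v => B' v v := B'.continuous.clm_apply continuous_id
  exact this

lemma poly_cont (G : MvPolynomial τ ℂ) : Continuous fun v => MvPolynomial.eval (X v) G :=
  (MvPolynomial.continuous_eval G).comp X.continuous

lemma gauss_poly_integrable [MeasurableSpace V] [BorelSpace V] (μ : Measure V)
    [μ.IsAddHaarMeasure] (hpos : ∀ v, v ≠ 0 → 0 < B v v) (G : MvPolynomial τ ℂ) :
    Integrable (fun v => MvPolynomial.eval (X v) G * (Real.exp (-B v v) : ℂ)) μ := by
  obtain ⟨c, hc, h⟩ := form_coercive B hpos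
  obtain ⟨C, hC, k, hk⟩ := poly_growth X G
  refine integrable_gauss_growth μ _ ?_ C c hc k fun v => ?_
  · have h1 := poly_cont X G
    have h2 := form_cont B
    exact (h1.mul (Complex.continuous_ofReal.comp (Real.continuous_exp.comp h2.neg))).aestronglyMeasurable
  · rw [norm_mul, Complex.norm_real, Real.norm_of_nonneg (Real.exp_pos _).le]
    have := hk v
    have := h v
    gcongr

lemma gauss_poly_integrable' [MeasurableSpace V] [BorelSpace V] (μ : Measure V)
    [μ.IsAddHaarMeasure] (hpos : ∀ v, v ≠ 0 → 0 < B v v) (G : MvPolynomial τ ℂ) (w : V) :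
    Integrable (fun v => MvPolynomial.eval (X v) G * ((2 * B v w : ℝ) * (Real.exp (-B v v) : ℂ))) μ := by
  obtain ⟨c, hc, h⟩ := form_coercive B hpos
  obtain ⟨C, hC, k, hk⟩ := poly_growth X G
  let L : V →L[ℝ] ℝ := LinearMap.toContinuousLinearMap (B.flip w)
  have hL : ∀ v, B v w = L v := fun v => rfl
  refine integrable_gauss_growth μ _ ?_ (C * (2 * ‖L‖)) c hc (k + 1) fun v => ?_
  · have h1 := poly_cont X G
    have h2 := form_cont B
    have h3 := L.continuous
    simp only [hL]
    exact (h1.mul ((Complex.continuous_ofReal.comp (continuous_const.mul h3)).mul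
      (Complex.continuous_ofReal.comp (Real.continuous_exp.comp h2.neg)))).aestronglyMeasurable
  · rw [norm_mul, norm_mul, Complex.norm_real, Complex.norm_real,
      Real.norm_of_nonneg (Real.exp_pos _).le, hL]
    have h1 := hk v
    have h2 := h v
    have h3 : ‖2 * L v‖ ≤ 2 * ‖L‖ * (1 + ‖v‖) := by
      rw [norm_mul, Real.norm_ofNat, mul_assoc]
      have := L.le_opNorm v
      have := norm_nonneg L
      nlinarith
    calc _ ≤ (C * (1 + ‖v‖) ^ k) * ((2 * ‖L‖ * (1 + ‖v‖)) * Real.exp (-(c * ‖v‖ ^ 2))) := by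
          gcongr
      _ = _ := by ring

lemma gauss_stein [MeasurableSpace V] [BorelSpace V] (μ : Measure V)
    [μ.IsAddHaarMeasure] (hpos : ∀ v, v ≠ 0 → 0 < B v v) (hsymm : ∀ v w, B v w = B w v)
    (G : MvPolynomial τ ℂ) (w : V) :
    ∫ v, MvPolynomial.eval (X v) G * ((2 * B v w : ℝ) * (Real.exp (-B v v) : ℂ)) ∂μ =
    ∫ v, MvPolynomial.eval (X v) (dirD (X w) G) * (Real.exp (-B v v) : ℂ) ∂μ := by
  have key := integral_bilinear_hasLineDerivAt_right_eq_neg_left_of_integrable (μ := μ)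
    (f := fun v => MvPolynomial.eval (X v) G)
    (f' := fun v => MvPolynomial.eval (X v) (dirD (X w) G))
    (g := fun v => (Real.exp (-B v v) : ℂ))
    (g' := fun v => -((2 * B v w : ℝ) * (Real.exp (-B v v) : ℂ))) (v := w)
    (B := ContinuousLinearMap.mul ℝ ℂ)
    (by simpa using gauss_poly_integrable X B μ hpos _)
    (by simpa using (gauss_poly_integrable' X B μ hpos G w).neg)
    (by simpa using gauss_poly_integrable X B μ hpos _)
    (fun x _ => poly_lineDeriv X G x w)
    (fun x _ => by
      unfold HasLineDerivAt
      have h1 : HasDerivAt (fun t : ℝ => -B (x + t • w) (x + t • w)) (-(2 * B x w)) 0 := by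
        have : (fun t : ℝ => -B (x + t • w) (x + t • w)) =
            fun t : ℝ => -(B x x + t * (2 * B x w) + t ^ 2 * B w w) := by
          funext t
          simp only [map_add, map_smul, LinearMap.add_apply, LinearMap.smul_apply, smul_eq_mul]
          rw [hsymm w x]; ring
        rw [this]
        have h := ((((hasDerivAt_id (0 : ℝ)).mul_const (2 * B x w)).const_add (B x x)).add
          (((hasDerivAt_id (0 : ℝ)).pow 2).mul_const (B w w))).neg
        refine h.congr_deriv ?_
        simp
      have h2 := h1.exp.ofReal_comp
      refine h2.congr_deriv ?_
      simp
      ring)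
  simp only [ContinuousLinearMap.mul_apply', mul_neg, integral_neg] at key
  exact neg_injective key

/-- The Gaussian functional -/
def gaussE [MeasurableSpace V] [BorelSpace V] (μ : Measure V)
    [μ.IsAddHaarMeasure] (hpos : ∀ v, v ≠ 0 → 0 < B v v) : MvPolynomial τ ℂ →ₗ[ℂ] ℂ where
  toFun G := (∫ v, MvPolynomial.eval (X v) G * (Real.exp (-B v v) : ℂ) ∂μ) /
    (∫ v, (Real.exp (-B v v) : ℂ) ∂μ)
  map_add' p q := by
    rw [← add_div, ← integral_add (gauss_poly_integrable X B μ hpos p)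
      (gauss_poly_integrable X B μ hpos q)]
    simp [add_mul]
  map_smul' a p := by
    rw [RingHom.id_apply, smul_eq_mul, mul_div_assoc', ← integral_const_mul]
    simp [MvPolynomial.smul_eval, mul_assoc]

lemma gaussE_apply [MeasurableSpace V] [BorelSpace V] (μ : Measure V)
    [μ.IsAddHaarMeasure] (hpos : ∀ v, v ≠ 0 → 0 < B v v) (G : MvPolynomial τ ℂ) :
    gaussE X B μ hpos G = (∫ v, MvPolynomial.eval (X v) G * (Real.exp (-B v v) : ℂ) ∂μ) /
    (∫ v, (Real.exp (-B v v) : ℂ) ∂μ) := rfl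

/-- Stein identity in the form used: `X_α = a·2B(·,w) + b·2B(·,v)`. -/
lemma gaussE_stein [MeasurableSpace V] [BorelSpace V] (μ : Measure V)
    [μ.IsAddHaarMeasure] (hpos : ∀ v, v ≠ 0 → 0 < B v v) (hsymm : ∀ v w, B v w = B w v)
    (α : τ) (a b : ℂ) (w w' : V)
    (hX : ∀ v, X v α = a * (2 * B v w : ℝ) + b * (2 * B v w' : ℝ)) (G : MvPolynomial τ ℂ) :
    gaussE X B μ hpos (MvPolynomial.X α * G) =
      gaussE X B μ hpos (dirD (a • X w + b • X w') G) := by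
  have hd : dirD (a • X w + b • X w') G = a • dirD (X w) G + b • dirD (X w') G := by
    simp only [dirD_apply, Finset.smul_sum, ← Finset.sum_add_distrib, smul_smul, ← add_smul]
    simp
  rw [hd, map_add, map_smul, map_smul]
  simp only [gaussE_apply, smul_eq_mul]
  rw [← gauss_stein X B μ hpos hsymm G w, ← gauss_stein X B μ hpos hsymm G w']
  rw [mul_div_assoc', mul_div_assoc', ← add_div, ← integral_const_mul, ← integral_const_mul,
    ← integral_add ((gauss_poly_integrable' X B μ hpos G w).const_mul a)
      ((gauss_poly_integrable' X B μ hpos G w').const_mul b)]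
  congr 1
  refine integral_congr_ae (Eventually.of_forall fun v => ?_)
  simp only [map_mul, MvPolynomial.eval_X, hX v]
  ring

end GaussV
end partB

section partC

/-- discrete gradient -/
def gradM (N : ℕ) : Matrix (Fin N) (Fin (N + 1)) ℝ :=
  Matrix.of fun l j => (if j = l.castSucc then 1 else 0) - (if j = l.succ then 1 else 0)

lemma lap_eq (N : ℕ) (hN : 1 ≤ N) : neumannMinusLap (N + 1) = (gradM N)ᵀ * gradM N := by
  ext j k
  simp only [neumannMinusLap, gradM, Matrix.mul_apply, Matrix.transpose_apply, Matrix.of_apply]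
  have e1 : ∀ j k : Fin (N + 1), ∑ l : Fin N, (if j = l.castSucc then (1 : ℝ) else 0) *
      (if k = l.castSucc then 1 else 0) = if j = k ∧ (j : ℕ) < N then 1 else 0 := by
    intro j k
    by_cases h : (j : ℕ) < N
    · rw [Finset.sum_eq_single (⟨j, h⟩ : Fin N)]
      · have : j = (⟨j, h⟩ : Fin N).castSucc := by ext; simp
        simp only [← this, if_true, one_mul, h, and_true, eq_comm]
      · intro l _ hl
        rw [if_neg, zero_mul]
        rintro rfl
        exact hl (by ext; simp)
      · simp
    · rw [if_neg (by tauto)]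
      refine Finset.sum_eq_zero fun l _ => ?_
      rw [if_neg, zero_mul]
      rintro rfl
      exact h (by simp)
  have e2 : ∀ j k : Fin (N + 1), ∑ l : Fin N, (if j = l.castSucc then (1 : ℝ) else 0) *
      (if k = l.succ then 1 else 0) = if (j : ℕ) + 1 = k then 1 else 0 := by
    intro j k
    by_cases h : (j : ℕ) < N
    · rw [Finset.sum_eq_single (⟨j, h⟩ : Fin N)]
      · have : j = (⟨j, h⟩ : Fin N).castSucc := by ext; simp
        simp only [← this, if_true, one_mul]
        refine if_congr ?_ rfl rfl
        rw [Fin.ext_iff]; simp [eq_comm]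
      · intro l _ hl
        rw [if_neg, zero_mul]
        rintro rfl
        exact hl (by ext; simp)
      · simp
    · rw [if_neg (by have := k.2; omega)]
      refine Finset.sum_eq_zero fun l _ => ?_
      rw [if_neg, zero_mul]
      rintro rfl
      exact h (by simp)
  have e3 : ∀ j k : Fin (N + 1), ∑ l : Fin N, (if j = l.succ then (1 : ℝ) else 0) *
      (if k = l.succ then 1 else 0) = if j = k ∧ 0 < (j : ℕ) then 1 else 0 := by
    intro j k
    by_cases h : 0 < (j : ℕ)
    · have hj : (j : ℕ) - 1 < N := by have := j.2; omega
      have hjj : j = (⟨j - 1, hj⟩ : Fin N).succ := by ext; simp; omega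
      rw [Finset.sum_eq_single (⟨j - 1, hj⟩ : Fin N)]
      · simp only [← hjj, if_true, one_mul, h, and_true, eq_comm]
      · intro l _ hl
        rw [if_neg, zero_mul]
        rintro rfl
        exact hl (by ext; simp)
      · simp
    · rw [if_neg (by tauto)]
      refine Finset.sum_eq_zero fun l _ => ?_
      rw [if_neg, zero_mul]
      rintro rfl
      exact h (by simp)
  simp only [sub_mul, mul_sub, Finset.sum_sub_distrib, e1, e2, e3]
  have e4 : ∑ l : Fin N, (if j = l.succ then (1 : ℝ) else 0) *
      (if k = l.castSucc then 1 else 0) = if (k : ℕ) + 1 = j then 1 else 0 := by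
    rw [← e2 k j]
    exact Finset.sum_congr rfl fun l _ => mul_comm _ _
  rw [e4]
  have hj := j.2
  have hk := k.2
  by_cases hjk : j = k
  · subst hjk
    by_cases h0 : (j : ℕ) = 0
    · have : (j : ℕ) < N := by omega
      simp [h0]; omega
    · by_cases h1 : (j : ℕ) = N
      · simp [h1]; omega
      · have : (j : ℕ) < N := by omega
        have : 0 < (j : ℕ) := by omega
        simp [*]; norm_num
  · have hjk' : (j : ℕ) ≠ k := fun h => hjk (Fin.ext h)
    by_cases h1 : (j : ℕ) + 1 = k
    · have : ¬ ((k : ℕ) + 1 = j) := by omega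
      simp [hjk, h1, this]
    · by_cases h2 : (k : ℕ) + 1 = j
      · simp [hjk, h1, h2]
      · simp [hjk, h1, h2]

/-- The precision matrix. -/
def Amat (N W : ℕ) : Matrix (Fin (N + 1)) (Fin (N + 1)) ℝ :=
  (W : ℝ) ^ 2 • neumannMinusLap (N + 1) + 1

lemma Amat_posDef (N W : ℕ) (hN : 1 ≤ N) : (Amat N W).PosDef := by
  rw [Amat, lap_eq N hN, add_comm (_ • _) _]
  apply Matrix.PosDef.add_posSemidef Matrix.PosDef.one
  apply Matrix.PosSemidef.smul
  · have := Matrix.posSemidef_conjTranspose_mul_self (gradM N)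
    rwa [Matrix.conjTranspose_eq_transpose_of_trivial] at this
  · positivity

lemma Amat_symm (N W : ℕ) (hN : 1 ≤ N) (j k) : Amat N W j k = Amat N W k j := by
  have := (Amat_posDef N W hN).isHermitian.apply k j
  simpa using this

lemma J_eq (N W : ℕ) : Jmat (N + 1) W = (Amat N W)⁻¹ := rfl

lemma A_mul_J (N W : ℕ) (hN : 1 ≤ N) : Amat N W * Jmat (N + 1) W = 1 := by
  rw [J_eq]
  exact Matrix.mul_nonsing_inv _ (Amat_posDef N W hN).det_pos.ne'.isUnit

lemma J_symm (N W : ℕ) (hN : 1 ≤ N) (j k) : Jmat (N + 1) W j k = Jmat (N + 1) W k j := by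
  have h := (Amat_posDef N W hN).isHermitian.inv
  have := h.apply k j
  simpa [J_eq] using this

lemma J_det (N W : ℕ) : (Jmat (N + 1) W).det = ((Amat N W).det)⁻¹ := by
  rw [J_eq, Matrix.det_nonsing_inv, Ring.inverse_eq_inv']

lemma grad_sum (N : ℕ) (l : Fin N) (x : Fin (N + 1) → ℝ) :
    ∑ j, gradM N l j * x j = x l.castSucc - x l.succ := by
  simp [gradM, sub_mul, Finset.sum_sub_distrib]

lemma A_form (N W : ℕ) (hN : 1 ≤ N) (x y : Fin (N + 1) → ℝ) :
    ∑ j, ∑ k, Amat N W j k * (x j * y k) = ∑ j, x j * y j +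
      (W : ℝ) ^ 2 * ∑ l : Fin N, (x l.castSucc - x l.succ) * (y l.castSucc - y l.succ) := by
  have h1 : ∀ j k, Amat N W j k * (x j * y k) =
      (if j = k then x j * y k else 0) +
        (W : ℝ) ^ 2 * ∑ l : Fin N, (gradM N l j * x j) * (gradM N l k * y k) := by
    intro j k
    have : ∑ l : Fin N, (gradM N l j * x j) * (gradM N l k * y k) =
        (∑ l : Fin N, gradM N l j * gradM N l k) * (x j * y k) := by
      rw [Finset.sum_mul]
      exact Finset.sum_congr rfl fun l _ => by ring
    rw [this, Amat, lap_eq N hN]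
    simp only [Matrix.add_apply, Matrix.smul_apply, Matrix.mul_apply, Matrix.transpose_apply,
      Matrix.one_apply, smul_eq_mul]
    split_ifs <;> ring
  simp only [h1, Finset.sum_add_distrib]
  congr 1
  · simp
  · simp only [← grad_sum, ← Finset.mul_sum]
    congr 1
    simp only [Finset.sum_mul_sum]
    rw [Finset.sum_congr rfl fun j _ => Finset.sum_comm, Finset.sum_comm]

lemma A_mulVec (N W : ℕ) (hN : 1 ≤ N) (v : Fin (N + 1) → ℝ) (j : Fin (N + 1)) :
    ∑ k, Amat N W j k * v k = v j +
      (W : ℝ) ^ 2 * ∑ l : Fin N, gradM N l j * (v l.castSucc - v l.succ) := by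
  have h := A_form N W hN (Pi.single j 1) v
  simp only [← grad_sum N _ (Pi.single j 1)] at h
  simp [Pi.single_apply] at h
  exact h

lemma J_pos (N W : ℕ) (hN : 1 ≤ N) (hW : 1 ≤ W) (j k) : 0 < Jmat (N + 1) W j k := by
  set v : Fin (N + 1) → ℝ := fun j => Jmat (N + 1) W j k with hv
  have hW' : (0 : ℝ) < (W : ℝ) ^ 2 := by positivity
  have heq : ∀ j, v j + (W : ℝ) ^ 2 * ∑ l : Fin N, gradM N l j * (v l.castSucc - v l.succ) =
      if j = k then 1 else 0 := by
    intro j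
    rw [← A_mulVec N W hN v j]
    have := congrFun (congrFun (A_mul_J N W hN) j) k
    rwa [Matrix.mul_apply, Matrix.one_apply] at this
  have hterm : ∀ j, (∀ i, v j ≤ v i) → ∀ l : Fin N, gradM N l j * (v l.castSucc - v l.succ) ≤ 0 := by
    intro j hj l
    have hne : l.castSucc ≠ l.succ := by
      intro h; rw [Fin.ext_iff] at h; simp at h
    simp only [gradM, Matrix.of_apply]
    by_cases h1 : j = l.castSucc
    · have h2 : j ≠ l.succ := h1 ▸ hne
      rw [if_pos h1, if_neg h2, ← h1]
      linarith [hj l.succ]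
    · rw [if_neg h1]
      by_cases h2 : j = l.succ
      · rw [if_pos h2, ← h2]
        linarith [hj l.castSucc]
      · simp [h2]
  have hnn : ∀ j, 0 ≤ v j := by
    obtain ⟨m, hm⟩ := Finite.exists_min v
    intro j
    refine le_trans ?_ (hm j)
    have h1 := heq m
    have h2 : ∑ l : Fin N, gradM N l m * (v l.castSucc - v l.succ) ≤ 0 :=
      Finset.sum_nonpos fun l _ => hterm m hm l
    have h3 : (0 : ℝ) ≤ if m = k then 1 else 0 := by split_ifs <;> norm_num
    nlinarith
  have hzero : ∀ j, v j = 0 → j ≠ k ∧ ∀ l : Fin N, gradM N l j * (v l.castSucc - v l.succ) = 0 := by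
    intro j hj
    have hmin : ∀ i, v j ≤ v i := fun i => hj ▸ hnn i
    have h1 := heq j
    have h2 : ∑ l : Fin N, gradM N l j * (v l.castSucc - v l.succ) ≤ 0 :=
      Finset.sum_nonpos fun l _ => hterm j hmin l
    rw [hj, zero_add] at h1
    have h3 : j ≠ k := by
      intro h
      rw [if_pos h] at h1
      nlinarith
    rw [if_neg h3] at h1
    have h4 := (mul_eq_zero.1 h1).resolve_left hW'.ne'
    refine ⟨h3, fun l => ?_⟩
    exact (Finset.sum_eq_zero_iff_of_nonpos fun l _ => hterm j hmin l).1 h4 l (Finset.mem_univ _)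
  have hstep : ∀ l : Fin N, v l.castSucc = 0 ↔ v l.succ = 0 := by
    intro l
    have hne : l.castSucc ≠ l.succ := by
      intro h; rw [Fin.ext_iff] at h; simp at h
    constructor
    · intro h
      have := (hzero _ h).2 l
      simp [gradM, hne, h] at this
      exact this
    · intro h
      have := (hzero _ h).2 l
      simp [gradM, hne.symm, h] at this
      exact this
  have hall : ∀ j, v j = 0 ↔ v 0 = 0 := by
    intro j
    induction j using Fin.induction with
    | zero => rfl
    | succ l ih => rw [← hstep l]; exact ih
  refine lt_of_le_of_ne (hnn j) fun h => ?_
  have : v k = 0 := (hall k).2 ((hall j).1 h.symm)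
  exact (hzero k this).1 rfl
end partC

section partE

/-- abbreviation of the space of `2×2` matrices as functions -/
abbrev M2 := Fin 2 → Fin 2 → ℂ

/-- action of a real matrix on the site index -/
def siteAct {n : ℕ} (S : Matrix (Fin n) (Fin n) ℝ) : (Fin n → M2) →ₗ[ℝ] (Fin n → M2) where
  toFun Q := fun j => ∑ k, S j k • Q k
  map_add' Q Q' := by
    funext j
    simp [Finset.sum_add_distrib]
  map_smul' c Q := by
    funext j
    simp only [Pi.smul_apply, RingHom.id_apply, Finset.smul_sum]
    exact Finset.sum_congr rfl fun k _ => smul_comm _ _ _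

lemma siteAct_apply {n : ℕ} (S : Matrix (Fin n) (Fin n) ℝ) (Q : Fin n → M2) (j : Fin n) :
    siteAct S Q j = ∑ k, S j k • Q k := rfl

lemma siteAct_mul {n : ℕ} (S S' : Matrix (Fin n) (Fin n) ℝ) :
    siteAct (S * S') = siteAct S * siteAct S' := by
  refine LinearMap.ext fun Q => ?_
  funext j
  simp only [Module.End.mul_apply, siteAct_apply, Matrix.mul_apply, Finset.sum_smul,
    Finset.smul_sum, smul_smul]
  rw [Finset.sum_comm]

lemma siteAct_one {n : ℕ} : siteAct (1 : Matrix (Fin n) (Fin n) ℝ) = 1 := by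
  refine LinearMap.ext fun Q => ?_
  funext j
  simp [siteAct_apply, Matrix.one_apply]

lemma finrank_M2 : Module.finrank ℝ M2 = 8 := by
  rw [Module.finrank_pi_fintype]
  simp [Module.finrank_pi_fintype, Complex.finrank_real_complex]

lemma siteAct_det_diag {n : ℕ} (d : Fin n → ℝ) :
    LinearMap.det (siteAct (Matrix.diagonal d)) = ∏ j, d j ^ 8 := by
  have : siteAct (Matrix.diagonal d) =
      LinearMap.pi fun i => (d i • (LinearMap.id : M2 →ₗ[ℝ] M2)).comp (LinearMap.proj i) := by
    refine LinearMap.ext fun Q => ?_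
    funext j
    simp [siteAct_apply, Matrix.diagonal_apply]
  rw [this, LinearMap.det_pi]
  refine Finset.prod_congr rfl fun j _ => ?_
  rw [LinearMap.det_smul, finrank_M2, LinearMap.det_id, mul_one]

lemma exists_sqrt {n : ℕ} (A : Matrix (Fin n) (Fin n) ℝ) (hA : A.PosDef) :
    ∃ S : Matrix (Fin n) (Fin n) ℝ, Sᵀ * S = A ∧ LinearMap.det (siteAct S) = A.det ^ 4 := by
  set U : Matrix (Fin n) (Fin n) ℝ := (hA.isHermitian.eigenvectorUnitary : Matrix (Fin n) (Fin n) ℝ)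
  have hU1 : U * star U = 1 := Unitary.coe_mul_star_self _
  have hU2 : star U * U = 1 := Unitary.coe_star_mul_self _
  set d := hA.isHermitian.eigenvalues
  have hd : ∀ i, 0 < d i := hA.eigenvalues_pos
  have hspec : A = U * Matrix.diagonal d * star U := by
    have := hA.isHermitian.spectral_theorem
    rw [Unitary.conjStarAlgAut_apply] at this
    simpa using this
  have hst : star U = Uᵀ := by
    rw [Matrix.star_eq_conjTranspose, Matrix.conjTranspose_eq_transpose_of_trivial]
  refine ⟨U * Matrix.diagonal (fun i => Real.sqrt (d i)) * star U, ?_, ?_⟩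
  · rw [Matrix.transpose_mul, Matrix.transpose_mul, hst, Matrix.transpose_transpose,
      Matrix.diagonal_transpose, ← hst]
    calc _ = U * (Matrix.diagonal (fun i => Real.sqrt (d i)) * (star U * U) *
          Matrix.diagonal (fun i => Real.sqrt (d i))) * star U := by
            simp only [Matrix.mul_assoc]
      _ = A := by
            rw [hU2, Matrix.mul_one, Matrix.diagonal_mul_diagonal, hspec]
            congr 3
            funext i
            exact Real.mul_self_sqrt (hd i).le
  · rw [siteAct_mul, siteAct_mul, map_mul, map_mul, mul_right_comm, ← map_mul, ← siteAct_mul, hU1,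
      siteAct_one, map_one, one_mul, siteAct_det_diag]
    have : A.det = ∏ i, d i := by
      rw [hA.isHermitian.det_eq_prod_eigenvalues]
      simp [d]
    rw [this, ← Finset.prod_pow]
    refine Finset.prod_congr rfl fun i _ => ?_
    rw [show 8 = 2 * 4 by norm_num, pow_mul, Real.sq_sqrt (hd i).le]

lemma gauss_C (b : ℝ) (hb : 0 < b) : ∫ h : ℂ, Real.exp (-b * ‖h‖ ^ 2) = Real.pi / b := by
  rw [GaussianFourier.integral_rexp_neg_mul_sq_norm hb, Complex.finrank_real_complex]
  simp

lemma gauss_std (n : ℕ) :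
    ∫ Q : Fin n → M2, Real.exp (-∑ j, ∑ a, ∑ b, ‖Q j a b‖ ^ 2) = Real.pi ^ (4 * n) := by
  have h1 : ∀ Q : Fin n → M2, Real.exp (-∑ j, ∑ a, ∑ b, ‖Q j a b‖ ^ 2) =
      ∏ j, ∏ a, ∏ b, Real.exp (-1 * ‖Q j a b‖ ^ 2) := by
    intro Q
    simp only [← Real.exp_sum, neg_one_mul, Finset.sum_neg_distrib]
  simp only [h1]
  rw [integral_fintype_prod_volume_eq_prod
    (fun _ : Fin n => fun q : M2 => ∏ a, ∏ b, Real.exp (-1 * ‖q a b‖ ^ 2))]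
  rw [integral_fintype_prod_volume_eq_prod
    (fun _ : Fin 2 => fun q : Fin 2 → ℂ => ∏ b, Real.exp (-1 * ‖q b‖ ^ 2))]
  rw [integral_fintype_prod_volume_eq_prod
    (fun _ : Fin 2 => fun q : ℂ => Real.exp (-1 * ‖q‖ ^ 2))]
  rw [gauss_C 1 one_pos]
  simp
  rw [← pow_mul, ← pow_mul]
  congr 1
  ring

/-- the quadratic form of the `Q` field -/
def formQ {n : ℕ} (A : Matrix (Fin n) (Fin n) ℝ) :
    (Fin n → M2) →ₗ[ℝ] (Fin n → M2) →ₗ[ℝ] ℝ :=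
  LinearMap.mk₂ ℝ (fun Q Q' => ∑ j, ∑ k, A j k * ∑ a, ∑ b,
      ((Q j a b).re * (Q' k a b).re + (Q j a b).im * (Q' k a b).im))
    (by
      intro Q₁ Q₂ Q'
      simp only [← Finset.sum_add_distrib, ← mul_add, Pi.add_apply, Complex.add_re, Complex.add_im]
      refine Finset.sum_congr rfl fun j _ => Finset.sum_congr rfl fun k _ => ?_
      congr 1
      refine Finset.sum_congr rfl fun a _ => Finset.sum_congr rfl fun b _ => ?_
      ring)
    (by
      intro c Q Q'
      simp only [smul_eq_mul, Finset.mul_sum, Pi.smul_apply, Complex.real_smul, Complex.mul_re,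
        Complex.mul_im, Complex.ofReal_re, Complex.ofReal_im]
      refine Finset.sum_congr rfl fun j _ => Finset.sum_congr rfl fun k _ => ?_
      refine Finset.sum_congr rfl fun a _ => Finset.sum_congr rfl fun b _ => ?_
      ring)
    (by
      intro Q Q₁ Q₂
      simp only [← Finset.sum_add_distrib, ← mul_add, Pi.add_apply, Complex.add_re, Complex.add_im]
      refine Finset.sum_congr rfl fun j _ => Finset.sum_congr rfl fun k _ => ?_
      congr 1
      refine Finset.sum_congr rfl fun a _ => Finset.sum_congr rfl fun b _ => ?_
      ring)
    (by
      intro c Q Q'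
      simp only [smul_eq_mul, Finset.mul_sum, Pi.smul_apply, Complex.real_smul, Complex.mul_re,
        Complex.mul_im, Complex.ofReal_re, Complex.ofReal_im]
      refine Finset.sum_congr rfl fun j _ => Finset.sum_congr rfl fun k _ => ?_
      refine Finset.sum_congr rfl fun a _ => Finset.sum_congr rfl fun b _ => ?_
      ring)

lemma formQ_apply {n : ℕ} (A : Matrix (Fin n) (Fin n) ℝ) (Q Q' : Fin n → M2) :
    formQ A Q Q' = ∑ j, ∑ k, A j k * ∑ a, ∑ b,
      ((Q j a b).re * (Q' k a b).re + (Q j a b).im * (Q' k a b).im) := rfl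

lemma formQ_apply' {n : ℕ} (A : Matrix (Fin n) (Fin n) ℝ) (Q Q' : Fin n → M2) :
    formQ A Q Q' = ∑ a, ∑ b, ((∑ j, ∑ k, A j k * ((Q j a b).re * (Q' k a b).re)) +
      ∑ j, ∑ k, A j k * ((Q j a b).im * (Q' k a b).im)) := by
  rw [formQ_apply]
  simp only [Finset.mul_sum, ← Finset.sum_add_distrib, ← mul_add]
  simp only [Fin.sum_univ_two, Finset.sum_add_distrib]

lemma formQ_sqrt {n : ℕ} (S : Matrix (Fin n) (Fin n) ℝ) (Q : Fin n → M2) :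
    formQ (Sᵀ * S) Q Q = ∑ j, ∑ a, ∑ b, ‖siteAct S Q j a b‖ ^ 2 := by
  have key : ∀ x : Fin n → ℝ, ∑ j, ∑ k, (Sᵀ * S) j k * (x j * x k) =
      ∑ l, (∑ k, S l k * x k) ^ 2 := by
    intro x
    simp only [sq, Finset.sum_mul_sum]
    simp only [Matrix.mul_apply, Finset.sum_mul, Matrix.transpose_apply]
    rw [Finset.sum_congr rfl fun j _ => Finset.sum_comm, Finset.sum_comm]
    refine Finset.sum_congr rfl fun j _ => Finset.sum_congr rfl fun k _ => 
      Finset.sum_congr rfl fun l _ => ?_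
    ring
  rw [formQ_apply', Finset.sum_comm (s := (Finset.univ : Finset (Fin n)))]
  refine Finset.sum_congr rfl fun a _ => ?_
  rw [Finset.sum_comm (s := (Finset.univ : Finset (Fin n)))]
  refine Finset.sum_congr rfl fun b _ => ?_
  rw [key (fun j => (Q j a b).re), key (fun j => (Q j a b).im), ← Finset.sum_add_distrib]
  refine Finset.sum_congr rfl fun l _ => ?_
  rw [← Complex.normSq_eq_norm_sq, Complex.normSq_apply]
  simp [siteAct_apply, Finset.sum_apply, sq]

instance haarM2 : (volume : Measure M2).IsAddHaarMeasure :=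
  Measure.pi.isAddHaarMeasure (fun _ : Fin 2 => (volume : Measure (Fin 2 → ℂ)))

instance haarM2n (n : ℕ) : (volume : Measure (Fin n → M2)).IsAddHaarMeasure :=
  Measure.pi.isAddHaarMeasure (fun _ : Fin n => (volume : Measure M2))

instance haarV1 (n : ℕ) : (volume : Measure (Fin n → Fin n → ℂ)).IsAddHaarMeasure :=
  Measure.pi.isAddHaarMeasure (fun _ : Fin n => (volume : Measure (Fin n → ℂ)))

lemma gauss_Z {n : ℕ} (A : Matrix (Fin n) (Fin n) ℝ) (hA : A.PosDef) :
    ∫ Q : Fin n → M2, Real.exp (-formQ A Q Q) = Real.pi ^ (4 * n) * (A.det ^ 4)⁻¹ := by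
  obtain ⟨S, hS, hdet⟩ := exists_sqrt A hA
  have hpos : 0 < A.det ^ 4 := pow_pos hA.det_pos 4
  have hne : LinearMap.det (siteAct S) ≠ 0 := by rw [hdet]; exact hpos.ne'
  have hmap := Measure.map_linearMap_addHaar_eq_smul_addHaar
    (volume : Measure (Fin n → M2)) hne
  have hcont : Continuous (siteAct S) := LinearMap.continuous_of_finiteDimensional _
  have h1 : ∫ Q : Fin n → M2, Real.exp (-∑ j, ∑ a, ∑ b, ‖siteAct S Q j a b‖ ^ 2) =
      ∫ Q, Real.exp (-∑ j, ∑ a, ∑ b, ‖Q j a b‖ ^ 2) ∂(Measure.map (siteAct S) volume) := by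
    rw [integral_map hcont.aemeasurable]
    exact Continuous.aestronglyMeasurable (by fun_prop)
  rw [hmap, integral_smul_measure, gauss_std, hdet] at h1
  rw [← hS]
  simp only [formQ_sqrt]
  rw [h1, hS, ENNReal.toReal_ofReal (by positivity), abs_of_pos (by positivity), smul_eq_mul, mul_comm]

lemma formQ_pos {n : ℕ} (A : Matrix (Fin n) (Fin n) ℝ) (hA : A.PosDef) (Q : Fin n → M2)
    (hQ : Q ≠ 0) : 0 < formQ A Q Q := by
  obtain ⟨S, hS, hdet⟩ := exists_sqrt A hA
  have hne : LinearMap.det (siteAct S) ≠ 0 := by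
    rw [hdet]; exact (pow_pos hA.det_pos 4).ne'
  have h0 : siteAct S Q ≠ 0 := by
    intro h
    apply hQ
    have hinj := (LinearMap.equivOfDetNeZero _ hne).injective
    apply hinj
    rw [map_zero]
    exact h
  rw [← hS, formQ_sqrt]
  by_contra hcon
  have hs : ∑ j, ∑ a, ∑ b, ‖siteAct S Q j a b‖ ^ 2 = 0 :=
    le_antisymm (not_lt.1 hcon) (by positivity)
  apply h0
  funext j a b
  rw [Finset.sum_eq_zero_iff_of_nonneg (fun _ _ => by positivity)] at hs
  have hs := hs j (Finset.mem_univ _)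
  rw [Finset.sum_eq_zero_iff_of_nonneg (fun _ _ => by positivity)] at hs
  have hs := hs a (Finset.mem_univ _)
  rw [Finset.sum_eq_zero_iff_of_nonneg (fun _ _ => by positivity)] at hs
  have hs := hs b (Finset.mem_univ _)
  simpa using hs

lemma formQ_symm {n : ℕ} (A : Matrix (Fin n) (Fin n) ℝ) (hA : ∀ j k, A j k = A k j)
    (Q Q' : Fin n → M2) : formQ A Q Q' = formQ A Q' Q := by
  rw [formQ_apply, formQ_apply, Finset.sum_comm]
  refine Finset.sum_congr rfl fun j _ => Finset.sum_congr rfl fun k _ => ?_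
  rw [hA k j]
  congr 1
  refine Finset.sum_congr rfl fun a _ => Finset.sum_congr rfl fun b _ => ?_
  ring

lemma formQ_A (N W : ℕ) (hN : 1 ≤ N) (Q : Fin (N + 1) → M2) :
    formQ (Amat N W) Q Q = ∑ j, ∑ a, ∑ b, ‖Q j a b‖ ^ 2 +
      (W : ℝ) ^ 2 * ∑ l : Fin N, ∑ a, ∑ b, ‖Q l.castSucc a b - Q l.succ a b‖ ^ 2 := by
  rw [formQ_apply']
  simp only [A_form N W hN]
  simp only [← Complex.normSq_eq_norm_sq, Complex.normSq_apply, Complex.sub_re, Complex.sub_im]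
  simp only [Fin.sum_univ_two, Finset.sum_add_distrib]
  ring
end partE

section partF

/-- index set of the big block matrices -/
abbrev Idx (n : ℕ) := (Fin 2 ⊕ Fin 2) × Fin n

/-- the quadratic form of the matrix `H` -/
def formH {n : ℕ} (J : Matrix (Fin n) (Fin n) ℝ) :
    (Fin n → Fin n → ℂ) →ₗ[ℝ] (Fin n → Fin n → ℂ) →ₗ[ℝ] ℝ :=
  LinearMap.mk₂ ℝ (fun H H' => ∑ j, ∑ k, ((H j k).re * (H' j k).re + (H j k).im * (H' j k).im) / J j k)
    (by
      intro Q₁ Q₂ Q'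
      simp only [← Finset.sum_add_distrib, ← add_div, Pi.add_apply, Complex.add_re, Complex.add_im]
      refine Finset.sum_congr rfl fun j _ => Finset.sum_congr rfl fun k _ => ?_
      ring)
    (by
      intro c Q Q'
      simp only [smul_eq_mul, Finset.mul_sum, Pi.smul_apply, Complex.real_smul, Complex.mul_re,
        Complex.mul_im, Complex.ofReal_re, Complex.ofReal_im]
      refine Finset.sum_congr rfl fun j _ => Finset.sum_congr rfl fun k _ => ?_
      ring)
    (by
      intro Q₁ Q₂ Q'
      simp only [← Finset.sum_add_distrib, ← add_div, Pi.add_apply, Complex.add_re, Complex.add_im]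
      refine Finset.sum_congr rfl fun j _ => Finset.sum_congr rfl fun k _ => ?_
      ring)
    (by
      intro c Q Q'
      simp only [smul_eq_mul, Finset.mul_sum, Pi.smul_apply, Complex.real_smul, Complex.mul_re,
        Complex.mul_im, Complex.ofReal_re, Complex.ofReal_im]
      refine Finset.sum_congr rfl fun j _ => Finset.sum_congr rfl fun k _ => ?_
      ring)

lemma formH_apply {n : ℕ} (J : Matrix (Fin n) (Fin n) ℝ) (H H' : Fin n → Fin n → ℂ) :
    formH J H H' = ∑ j, ∑ k,
      ((H j k).re * (H' j k).re + (H j k).im * (H' j k).im) / J j k := rfl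

lemma formH_self {n : ℕ} (J : Matrix (Fin n) (Fin n) ℝ) (H : Fin n → Fin n → ℂ) :
    formH J H H = ∑ j, ∑ k, ‖H j k‖ ^ 2 / J j k := by
  simp only [formH_apply, ← Complex.normSq_eq_norm_sq, Complex.normSq_apply]

lemma formH_symm {n : ℕ} (J : Matrix (Fin n) (Fin n) ℝ) (H H' : Fin n → Fin n → ℂ) :
    formH J H H' = formH J H' H := by
  simp only [formH_apply]
  refine Finset.sum_congr rfl fun j _ => Finset.sum_congr rfl fun k _ => ?_
  ring

lemma formH_pos {n : ℕ} (J : Matrix (Fin n) (Fin n) ℝ) (hJ : ∀ j k, 0 < J j k)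
    (H : Fin n → Fin n → ℂ) (hH : H ≠ 0) : 0 < formH J H H := by
  rw [formH_self]
  have hnn : ∀ j k, 0 ≤ ‖H j k‖ ^ 2 / J j k := fun j k => div_nonneg (by positivity) (hJ j k).le
  by_contra hcon
  have hs : ∑ j, ∑ k, ‖H j k‖ ^ 2 / J j k = 0 :=
    le_antisymm (not_lt.1 hcon) (Finset.sum_nonneg fun j _ => Finset.sum_nonneg fun k _ => hnn j k)
  apply hH
  funext j k
  rw [Finset.sum_eq_zero_iff_of_nonneg
    (fun j _ => Finset.sum_nonneg fun k _ => hnn j k)] at hs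
  have hs := hs j (Finset.mem_univ _)
  rw [Finset.sum_eq_zero_iff_of_nonneg (fun k _ => hnn j k)] at hs
  have hs := hs k (Finset.mem_univ _)
  simpa [(hJ j k).ne'] using hs

lemma gauss_ZH {n : ℕ} (J : Matrix (Fin n) (Fin n) ℝ) (hJ : ∀ j k, 0 < J j k) :
    ∫ H : Fin n → Fin n → ℂ, Real.exp (-formH J H H) = ∏ j, ∏ k, (Real.pi * J j k) := by
  have h1 : ∀ H : Fin n → Fin n → ℂ, Real.exp (-formH J H H) =
      ∏ j, ∏ k, Real.exp (-(J j k)⁻¹ * ‖H j k‖ ^ 2) := by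
    intro H
    rw [formH_self]
    simp only [← Real.exp_sum, neg_mul, Finset.sum_neg_distrib, div_eq_inv_mul]
  simp only [h1]
  rw [integral_fintype_prod_volume_eq_prod
    (fun j : Fin n => fun q : Fin n → ℂ => ∏ k, Real.exp (-(J j k)⁻¹ * ‖q k‖ ^ 2))]
  refine Finset.prod_congr rfl fun j _ => ?_
  rw [integral_fintype_prod_volume_eq_prod
    (fun k : Fin n => fun q : ℂ => Real.exp (-(J j k)⁻¹ * ‖q‖ ^ 2))]
  refine Finset.prod_congr rfl fun k _ => ?_
  rw [gauss_C _ (inv_pos.2 (hJ j k)), div_inv_eq_mul]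

/-- entries of the block matrix built from `H` -/
def x1 {n : ℕ} (H : Fin n → Fin n → ℂ) : Idx n × Idx n → ℂ
  | ((Sum.inl a, j), (Sum.inl c, k)) => if a = c then -H j k else 0
  | ((Sum.inr a, j), (Sum.inr c, k)) => if a = c then -starRingEnd ℂ (H k j) else 0
  | ((Sum.inl _, _), (Sum.inr _, _)) => 0
  | ((Sum.inr _, _), (Sum.inl _, _)) => 0

/-- entries of the block matrix built from `Q` -/
def x2 {n : ℕ} (Q : Fin n → M2) : Idx n × Idx n → ℂ
  | ((Sum.inl _, _), (Sum.inl _, _)) => 0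
  | ((Sum.inr _, _), (Sum.inr _, _)) => 0
  | ((Sum.inl a, j), (Sum.inr b, k)) => if j = k then Complex.I * Q j a b else 0
  | ((Sum.inr b, j), (Sum.inl a, k)) => if j = k then Complex.I * starRingEnd ℂ (Q j a b) else 0

/-- `x1` as a continuous linear map -/
def X1 (n : ℕ) : (Fin n → Fin n → ℂ) →L[ℝ] (Idx n × Idx n → ℂ) :=
  LinearMap.toContinuousLinearMap
    { toFun := x1
      map_add' := by
        intro H H'
        funext ⟨⟨s, j⟩, ⟨t, k⟩⟩
        rcases s with a | a <;> rcases t with c | c <;> simp only [x1, Pi.add_apply, map_add] <;>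
          first | (split_ifs <;> ring) | ring
      map_smul' := by
        intro r H
        funext ⟨⟨s, j⟩, ⟨t, k⟩⟩
        rcases s with a | a <;> rcases t with c | c <;>
          simp [x1, Pi.smul_apply] }

/-- `x2` as a continuous linear map -/
def X2 (n : ℕ) : (Fin n → M2) →L[ℝ] (Idx n × Idx n → ℂ) :=
  LinearMap.toContinuousLinearMap
    { toFun := x2
      map_add' := by
        intro H H'
        funext ⟨⟨s, j⟩, ⟨t, k⟩⟩
        rcases s with a | a <;> rcases t with c | c <;> simp only [x2, Pi.add_apply, map_add] <;>
          first | (split_ifs <;> ring) | ring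
      map_smul' := by
        intro r H
        funext ⟨⟨s, j⟩, ⟨t, k⟩⟩
        rcases s with a | a <;> rcases t with c | c <;>
          simp [x2, Pi.smul_apply, mul_left_comm] }

lemma X1_apply (n : ℕ) (H) : X1 n H = x1 H := rfl
lemma X2_apply (n : ℕ) (H) : X2 n H = x2 H := rfl

/-- covariance weights of the `H` field -/
def w1 {n : ℕ} (J : Matrix (Fin n) (Fin n) ℝ) : Idx n × Idx n → Idx n × Idx n → ℂ
  | ((Sum.inl a, j), (Sum.inl c, k)), ((Sum.inr b, k'), (Sum.inr d, j')) =>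
      if j = j' then if b = d then if k = k' then if a = c then (J j k : ℂ) else 0 else 0 else 0 else 0
  | ((Sum.inr a, j), (Sum.inr c, k)), ((Sum.inl b, k'), (Sum.inl d, j')) =>
      if j = j' then if b = d then if k = k' then if a = c then (J k j : ℂ) else 0 else 0 else 0 else 0
  | _, _ => 0

/-- covariance weights of the `Q` field -/
def w2 {n : ℕ} (J : Matrix (Fin n) (Fin n) ℝ) : Idx n × Idx n → Idx n × Idx n → ℂ
  | ((Sum.inl a, j), (Sum.inr b, k)), ((Sum.inr b', j'), (Sum.inl a', k')) =>
      if j' = k' then if a = a' then if b = b' then if j = k then (-J j j' : ℂ) else 0 else 0 else 0 else 0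
  | ((Sum.inr b, j), (Sum.inl a, k)), ((Sum.inl a', j'), (Sum.inr b', k')) =>
      if j' = k' then if b = b' then if a = a' then if j = k then (-J j j' : ℂ) else 0 else 0 else 0 else 0
  | _, _ => 0

lemma expand1 {n : ℕ} {M : Type*} [AddCommMonoid M] [Module ℂ M] (J : Matrix (Fin n) (Fin n) ℝ)
    (φ : Idx n × Idx n → Idx n × Idx n → M) : ∑ α, ∑ β, w1 J α β • φ α β =
    (∑ a : Fin 2, ∑ j : Fin n, ∑ k : Fin n, ∑ b : Fin 2, (J j k : ℂ) •
        φ ((Sum.inl a, j), (Sum.inl a, k)) ((Sum.inr b, k), (Sum.inr b, j))) +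
      ∑ a : Fin 2, ∑ j : Fin n, ∑ k : Fin n, ∑ b : Fin 2, (J k j : ℂ) •
        φ ((Sum.inr a, j), (Sum.inr a, k)) ((Sum.inl b, k), (Sum.inl b, j)) := by
  simp only [Fintype.sum_prod_type, Fintype.sum_sum_type]
  simp only [w1, zero_smul, Finset.sum_const_zero, add_zero, zero_add]
  simp only [ite_smul, zero_smul, Finset.sum_ite_eq, Finset.mem_univ, if_true]
  congr 1
  · refine Finset.sum_congr rfl fun a _ => Finset.sum_congr rfl fun j _ => ?_
    rw [Finset.sum_eq_single a]
    · simp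
    · intro b _ hb; simp [hb.symm]
    · simp
  · refine Finset.sum_congr rfl fun a _ => Finset.sum_congr rfl fun j _ => ?_
    rw [Finset.sum_eq_single a]
    · simp
    · intro b _ hb; simp [hb.symm]
    · simp

lemma expand2 {n : ℕ} {M : Type*} [AddCommMonoid M] [Module ℂ M] (J : Matrix (Fin n) (Fin n) ℝ)
    (φ : Idx n × Idx n → Idx n × Idx n → M) : ∑ α, ∑ β, w2 J α β • φ α β =
      (∑ a : Fin 2, ∑ j : Fin n, ∑ b : Fin 2, ∑ j' : Fin n, (-J j j' : ℂ) •
        φ ((Sum.inl a, j), (Sum.inr b, j)) ((Sum.inr b, j'), (Sum.inl a, j'))) +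
      ∑ b : Fin 2, ∑ j : Fin n, ∑ a : Fin 2, ∑ j' : Fin n, (-J j j' : ℂ) •
        φ ((Sum.inr b, j), (Sum.inl a, j)) ((Sum.inl a, j'), (Sum.inr b, j')) := by
  simp only [Fintype.sum_prod_type, Fintype.sum_sum_type]
  simp only [w2, zero_smul, Finset.sum_const_zero, add_zero, zero_add]
  simp only [ite_smul, zero_smul, Finset.sum_ite_eq, Finset.mem_univ, if_true]
  congr 1
  · refine Finset.sum_congr rfl fun a _ => Finset.sum_congr rfl fun j _ =>
      Finset.sum_congr rfl fun b _ => ?_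
    rw [Finset.sum_eq_single j, Finset.sum_eq_single b]
    · simp
    · intro b _ hb; simp [hb.symm]
    · simp
    · intro b _ hb; simp [hb.symm]
    · simp
  · refine Finset.sum_congr rfl fun a _ => Finset.sum_congr rfl fun j _ =>
      Finset.sum_congr rfl fun b _ => ?_
    rw [Finset.sum_eq_single j, Finset.sum_eq_single b]
    · simp
    · intro b _ hb; simp [hb.symm]
    · simp
    · intro b _ hb; simp [hb.symm]
    · simp

lemma gLap_eq {n : ℕ} (J : Matrix (Fin n) (Fin n) ℝ) (hJ : ∀ j k, J j k = J k j)
    (D : Matrix (Idx n) (Idx n) ℂ) : gLap (w1 J) (detPoly D) = gLap (w2 J) (detPoly D) := by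
  have e1 : gLap (w1 J) (detPoly D) =
      (∑ a : Fin 2, ∑ j : Fin n, ∑ k : Fin n, ∑ b : Fin 2, (J j k : ℂ) •
        MvPolynomial.pderiv (((Sum.inr b, k), (Sum.inr b, j)) : Idx n × Idx n)
          (MvPolynomial.pderiv ((Sum.inl a, j), (Sum.inl a, k)) (detPoly D))) +
      ∑ a : Fin 2, ∑ j : Fin n, ∑ k : Fin n, ∑ b : Fin 2, (J k j : ℂ) •
        MvPolynomial.pderiv (((Sum.inl b, k), (Sum.inl b, j)) : Idx n × Idx n)
          (MvPolynomial.pderiv ((Sum.inr a, j), (Sum.inr a, k)) (detPoly D)) := by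
    simp only [gLap, dirD_apply]
    exact expand1 J fun α β => MvPolynomial.pderiv β (MvPolynomial.pderiv α (detPoly D))
  have e2 : gLap (w2 J) (detPoly D) =
      (∑ a : Fin 2, ∑ j : Fin n, ∑ b : Fin 2, ∑ j' : Fin n, (-J j j' : ℂ) •
        MvPolynomial.pderiv (((Sum.inr b, j'), (Sum.inl a, j')) : Idx n × Idx n)
          (MvPolynomial.pderiv ((Sum.inl a, j), (Sum.inr b, j)) (detPoly D))) +
      ∑ b : Fin 2, ∑ j : Fin n, ∑ a : Fin 2, ∑ j' : Fin n, (-J j j' : ℂ) •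
        MvPolynomial.pderiv (((Sum.inl a, j'), (Sum.inr b, j')) : Idx n × Idx n)
          (MvPolynomial.pderiv ((Sum.inr b, j), (Sum.inl a, j)) (detPoly D)) := by
    simp only [gLap, dirD_apply]
    exact expand2 J fun α β => MvPolynomial.pderiv β (MvPolynomial.pderiv α (detPoly D))
  rw [e1, e2]
  congr 1
  · refine Finset.sum_congr rfl fun a _ => Finset.sum_congr rfl fun j _ => ?_
    rw [Finset.sum_comm]
    refine Finset.sum_congr rfl fun b _ => Finset.sum_congr rfl fun k _ => ?_
    rw [pderiv_pderiv_detPoly D (by simp), smul_neg, neg_smul]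
  · refine Finset.sum_congr rfl fun a _ => Finset.sum_congr rfl fun j _ => ?_
    rw [Finset.sum_comm]
    refine Finset.sum_congr rfl fun b _ => Finset.sum_congr rfl fun k _ => ?_
    rw [pderiv_pderiv_detPoly D (by simp), smul_neg, neg_smul, hJ k j]

lemma stein1 {n : ℕ} (J : Matrix (Fin n) (Fin n) ℝ) (hJ : ∀ j k, 0 < J j k) (α : Idx n × Idx n)
    (G : MvPolynomial (Idx n × Idx n) ℂ) :
    gaussE (X1 n) (formH J) volume (formH_pos J hJ) (MvPolynomial.X α * G) =
      gaussE (X1 n) (formH J) volume (formH_pos J hJ) (dirD (w1 J α) G) := by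
  have form1 : ∀ (H : Fin n → Fin n → ℂ) (j k) (c : ℂ), formH J H
      (fun j' k' => if j = j' then if k = k' then c else 0 else 0) =
      ((H j k).re * c.re + (H j k).im * c.im) / J j k := by
    intro H j k c
    rw [formH_apply, Finset.sum_eq_single j, Finset.sum_eq_single k]
    · simp
    · intro b _ hb; simp [hb.symm]
    · simp
    · intro b _ hb; simp [hb.symm]
    · simp
  have zero : ∀ α, (∀ H : Fin n → Fin n → ℂ, x1 H α = 0) → w1 J α = 0 →
     gaussE (X1 n) (formH J) volume (formH_pos J hJ) (MvPolynomial.X α * G) =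
      gaussE (X1 n) (formH J) volume (formH_pos J hJ) (dirD (w1 J α) G) := by
    intro α h1 h2
    have := gaussE_stein (X1 n) (formH J) volume (formH_pos J hJ) (formH_symm J) α 0 0 0 0
      (fun v => by rw [X1_apply, h1]; simp) G
    rw [this, h2]
    simp
  obtain ⟨⟨s, j⟩, ⟨t, k⟩⟩ := α
  rcases s with a | a <;> rcases t with c | c
  · by_cases hac : a = c
    · have hne : (J j k : ℂ) ≠ 0 := by exact_mod_cast (hJ j k).ne'
      have := gaussE_stein (X1 n) (formH J) volume (formH_pos J hJ) (formH_symm J)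
        ((Sum.inl a, j), (Sum.inl c, k)) (-(J j k : ℂ) / 2) (-(J j k : ℂ) / 2 * Complex.I)
        (fun j' k' => if j = j' then if k = k' then 1 else 0 else 0)
        (fun j' k' => if j = j' then if k = k' then Complex.I else 0 else 0)
        (fun v => by
          rw [form1, form1, X1_apply]
          simp only [x1, if_pos hac]
          push_cast
          simp only [Complex.one_re, Complex.one_im, Complex.I_re, Complex.I_im]
          field_simp
          simp
          apply Complex.ext <;> simp) G
      rw [this]
      congr 3
      funext ⟨⟨s', j'⟩, ⟨t', k'⟩⟩
      rw [X1_apply, X1_apply]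
      rcases s' with a' | a' <;> rcases t' with c' | c' <;>
        simp only [x1, w1, if_pos hac, Pi.add_apply, Pi.smul_apply, smul_eq_mul, mul_zero, add_zero]
      · split_ifs <;> simp
        linear_combination (J j k / 2 : ℂ) * Complex.I_mul_I
      · clear this zero form1
        split_ifs <;> simp_all <;> ring_nf <;> simp [Complex.I_sq] <;> ring
    · refine zero _ (fun H => by simp [x1, hac]) ?_
      funext ⟨⟨s', j'⟩, ⟨t', k'⟩⟩
      rcases s' with a' | a' <;> rcases t' with c' | c' <;> simp [w1, hac]
  · refine zero _ (fun H => by simp [x1]) ?_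
    funext ⟨⟨s', j'⟩, ⟨t', k'⟩⟩
    rcases s' with a' | a' <;> rcases t' with c' | c' <;> simp [w1]
  · refine zero _ (fun H => by simp [x1]) ?_
    funext ⟨⟨s', j'⟩, ⟨t', k'⟩⟩
    rcases s' with a' | a' <;> rcases t' with c' | c' <;> simp [w1]
  · by_cases hac : a = c
    · have hne : (J k j : ℂ) ≠ 0 := by exact_mod_cast (hJ k j).ne'
      have := gaussE_stein (X1 n) (formH J) volume (formH_pos J hJ) (formH_symm J)
        ((Sum.inr a, j), (Sum.inr c, k)) (-(J k j : ℂ) / 2) ((J k j : ℂ) / 2 * Complex.I)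
        (fun j' k' => if k = j' then if j = k' then 1 else 0 else 0)
        (fun j' k' => if k = j' then if j = k' then Complex.I else 0 else 0)
        (fun v => by
          rw [form1, form1, X1_apply]
          simp only [x1, if_pos hac]
          push_cast
          simp only [Complex.one_re, Complex.one_im, Complex.I_re, Complex.I_im]
          field_simp
          simp
          apply Complex.ext <;> simp) G
      rw [this]
      congr 3
      funext ⟨⟨s', j'⟩, ⟨t', k'⟩⟩
      rw [X1_apply, X1_apply]
      rcases s' with a' | a' <;> rcases t' with c' | c' <;>
        simp only [x1, w1, if_pos hac, Pi.add_apply, Pi.smul_apply, smul_eq_mul, mul_zero, add_zero]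
      · clear this zero form1
        split_ifs <;> simp_all <;> ring_nf <;> simp [Complex.I_sq] <;> ring
      · split_ifs <;> simp
        linear_combination (J k j / 2 : ℂ) * Complex.I_mul_I
    · refine zero _ (fun H => by simp [x1, hac]) ?_
      funext ⟨⟨s', j'⟩, ⟨t', k'⟩⟩
      rcases s' with a' | a' <;> rcases t' with c' | c' <;> simp [w1, hac]

lemma stein2 {n : ℕ} (A J : Matrix (Fin n) (Fin n) ℝ) (hA : A.PosDef) (hAs : ∀ j k, A j k = A k j)
    (hJs : ∀ j k, J j k = J k j) (hAJ : A * J = 1) (α : Idx n × Idx n)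
    (G : MvPolynomial (Idx n × Idx n) ℂ) :
    gaussE (X2 n) (formQ A) volume (formQ_pos A hA) (MvPolynomial.X α * G) =
      gaussE (X2 n) (formQ A) volume (formQ_pos A hA) (dirD (w2 J α) G) := by
  have form1 : ∀ (Q : Fin n → M2) (j a b) (c : ℂ), formQ A Q
      (fun j' a' b' => if a = a' then if b = b' then (J j' j : ℂ) * c else 0 else 0) =
      (Q j a b).re * c.re + (Q j a b).im * c.im := by
    intro Q j a b c
    rw [formQ_apply', Finset.sum_eq_single a, Finset.sum_eq_single b]
    · have key : ∀ (x : Fin n → ℝ) (c : ℝ), ∑ i, ∑ k, A i k * (x i * (J k j * c)) = x j * c := by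
        intro x c
        have : ∀ i, ∑ k, A i k * (x i * (J k j * c)) = x i * c * (A * J) i j := by
          intro i
          rw [Matrix.mul_apply, Finset.mul_sum]
          exact Finset.sum_congr rfl fun k _ => by ring
        simp [this, hAJ, Matrix.one_apply]
      simp [key (fun i => (Q i a b).re), key (fun i => (Q i a b).im)]
    · intro b _ hb; simp [hb.symm]
    · simp
    · intro b _ hb; simp [hb.symm]
    · simp
  have zero : ∀ α, (∀ H : Fin n → M2, x2 H α = 0) → w2 J α = 0 →
     gaussE (X2 n) (formQ A) volume (formQ_pos A hA) (MvPolynomial.X α * G) =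
      gaussE (X2 n) (formQ A) volume (formQ_pos A hA) (dirD (w2 J α) G) := by
    intro α h1 h2
    have := gaussE_stein (X2 n) (formQ A) volume (formQ_pos A hA) (formQ_symm A hAs) α 0 0 0 0
      (fun v => by rw [X2_apply, h1]; simp) G
    rw [this, h2]
    simp
  obtain ⟨⟨s, j⟩, ⟨t, k⟩⟩ := α
  rcases s with a | b <;> rcases t with c | b
  · refine zero _ (fun H => by simp [x2]) ?_
    funext ⟨⟨s', j'⟩, ⟨t', k'⟩⟩
    rcases s' with a' | a' <;> rcases t' with c' | c' <;> simp [w2]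
  · by_cases hac : j = k
    · have := gaussE_stein (X2 n) (formQ A) volume (formQ_pos A hA) (formQ_symm A hAs)
        ((Sum.inl a, j), (Sum.inr b, k)) (Complex.I / 2) (-1 / 2)
        (fun j' a' b' => if a = a' then if b = b' then (J j' j : ℂ) * 1 else 0 else 0)
        (fun j' a' b' => if a = a' then if b = b' then (J j' j : ℂ) * Complex.I else 0 else 0)
        (fun v => by
          rw [form1, form1, X2_apply]
          simp only [x2, if_pos hac]
          push_cast
          apply Complex.ext <;> simp <;> ring) G
      rw [this]
      congr 3
      funext ⟨⟨s', j'⟩, ⟨t', k'⟩⟩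
      rw [X2_apply, X2_apply]
      rcases s' with a' | a' <;> rcases t' with c' | c' <;>
        simp only [x2, w2, if_pos hac, Pi.add_apply, Pi.smul_apply, smul_eq_mul, mul_zero, add_zero]
      · split_ifs <;> simp
        linear_combination 0
      · rw [hJs j j']
        split_ifs <;> simp
        linear_combination (J j' j : ℂ) * Complex.I_mul_I
    · refine zero _ (fun H => by simp [x2, hac]) ?_
      funext ⟨⟨s', j'⟩, ⟨t', k'⟩⟩
      rcases s' with a' | a' <;> rcases t' with c' | c' <;> simp [w2, hac]
  · by_cases hac : j = k
    · have := gaussE_stein (X2 n) (formQ A) volume (formQ_pos A hA) (formQ_symm A hAs)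
        ((Sum.inr b, j), (Sum.inl c, k)) (Complex.I / 2) (1 / 2)
        (fun j' a' b' => if c = a' then if b = b' then (J j' j : ℂ) * 1 else 0 else 0)
        (fun j' a' b' => if c = a' then if b = b' then (J j' j : ℂ) * Complex.I else 0 else 0)
        (fun v => by
          rw [form1, form1, X2_apply]
          simp only [x2, if_pos hac]
          push_cast
          apply Complex.ext <;> simp <;> ring) G
      rw [this]
      congr 3
      funext ⟨⟨s', j'⟩, ⟨t', k'⟩⟩
      rw [X2_apply, X2_apply]
      rcases s' with a' | a' <;> rcases t' with c' | c' <;>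
        simp only [x2, w2, if_pos hac, Pi.add_apply, Pi.smul_apply, smul_eq_mul, mul_zero, add_zero]
      · rw [hJs j j']
        clear this zero form1
        split_ifs <;> simp_all <;> ring_nf <;> simp [Complex.I_sq] <;> ring
      · split_ifs <;> simp
        linear_combination 0
    · refine zero _ (fun H => by simp [x2, hac]) ?_
      funext ⟨⟨s', j'⟩, ⟨t', k'⟩⟩
      rcases s' with a' | a' <;> rcases t' with c' | c' <;> simp [w2, hac]
  · refine zero _ (fun H => by simp [x2]) ?_
    funext ⟨⟨s', j'⟩, ⟨t', k'⟩⟩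
    rcases s' with a' | a' <;> rcases t' with c' | c' <;> simp [w2]
end partF

section partG

/-- the constant diagonal part of the block matrices -/
def Dbig (n : ℕ) (z₁ z₂ : ℂ) : Matrix (Idx n) (Idx n) ℂ :=
  Matrix.diagonal fun i => Sum.elim ![z₁, z₂] ![starRingEnd ℂ z₁, starRingEnd ℂ z₂] i.1

lemma det_x2 {n : ℕ} (z₁ z₂ : ℂ) (Q : Fin n → M2) :
    (Dbig n z₁ z₂ + Matrix.of fun i j => x2 Q (i, j)).det =
      ∏ j, (Qcal z₁ z₂ (Matrix.of (Q j))).det := by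
  rw [← Matrix.det_blockDiagonal]
  congr 1
  ext ⟨s, j⟩ ⟨t, k⟩
  rw [Matrix.blockDiagonal_apply]
  by_cases h : j = k
  · subst h
    rcases s with a | a <;> rcases t with c | c <;>
      simp [Dbig, x2, Qcal, Matrix.diagonal_apply]
  · rcases s with a | a <;> rcases t with c | c <;>
      simp [Dbig, x2, Matrix.diagonal_apply, h]

lemma det_x1 {n : ℕ} (z₁ z₂ : ℂ) (H : Fin n → Fin n → ℂ) :
    (Dbig n z₁ z₂ + Matrix.of fun i j => x1 H (i, j)).det =
      ((‖(Matrix.of H - z₁ • (1 : Matrix (Fin n) (Fin n) ℂ)).det‖ ^ 2 *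
        ‖(Matrix.of H - z₂ • (1 : Matrix (Fin n) (Fin n) ℂ)).det‖ ^ 2 : ℝ) : ℂ) := by
  let M : Fin 2 ⊕ Fin 2 → Matrix (Fin n) (Fin n) ℂ :=
    Sum.elim (fun a => ![z₁, z₂] a • (1 : Matrix (Fin n) (Fin n) ℂ) - Matrix.of H)
      (fun a => (![z₁, z₂] a • (1 : Matrix (Fin n) (Fin n) ℂ) - Matrix.of H)ᴴ)
  have h1 : Dbig n z₁ z₂ + Matrix.of (fun i j => x1 H (i, j)) =
      (Matrix.blockDiagonal M).submatrix (Equiv.prodComm _ _) (Equiv.prodComm _ _) := by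
    ext ⟨s, j⟩ ⟨t, k⟩
    rw [Matrix.submatrix_apply]
    simp only [Equiv.prodComm_apply, Prod.swap_prod_mk]
    rw [Matrix.blockDiagonal_apply]
    rcases s with a | a <;> rcases t with c | c
    · by_cases h : a = c
      · subst h
        simp [Dbig, x1, M, Matrix.diagonal_apply, Matrix.one_apply, sub_eq_add_neg]
      · simp [Dbig, x1, Matrix.diagonal_apply, h]
    · simp [Dbig, x1, Matrix.diagonal_apply]
    · simp [Dbig, x1, Matrix.diagonal_apply]
    · by_cases h : a = c
      · subst h
        simp only [Dbig, x1, M, Matrix.diagonal_apply, Matrix.one_apply, sub_eq_add_neg,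
          Matrix.add_apply, Matrix.of_apply, Sum.elim_inr, Matrix.conjTranspose_apply,
          Matrix.smul_apply, Matrix.neg_apply, star_add, star_neg, if_true, smul_eq_mul]
        congr 1
        by_cases hjk : j = k
        · subst hjk
          fin_cases a <;> simp
        · simp [hjk, Ne.symm hjk]
      · simp [Dbig, x1, Matrix.diagonal_apply, h]
  have h2 : ∀ z : ℂ, (z • (1 : Matrix (Fin n) (Fin n) ℂ) - Matrix.of H).det *
      ((z • (1 : Matrix (Fin n) (Fin n) ℂ) - Matrix.of H)ᴴ).det =
      ((‖(Matrix.of H - z • (1 : Matrix (Fin n) (Fin n) ℂ)).det‖ ^ 2 : ℝ) : ℂ) := by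
    intro z
    rw [Matrix.det_conjTranspose, ← neg_sub, Matrix.det_neg, ← Complex.normSq_eq_norm_sq,
      ← Complex.mul_conj]
    simp only [Fintype.card_fin, star_mul', star_pow, star_neg, star_one]
    have : ((-1 : ℂ) ^ n) * (-1) ^ n = 1 := by rw [← mul_pow]; simp
    rw [starRingEnd_apply]
    linear_combination ((Matrix.of H - z • (1 : Matrix (Fin n) (Fin n) ℂ)).det *
      star (Matrix.of H - z • (1 : Matrix (Fin n) (Fin n) ℂ)).det) * this
  rw [h1, Matrix.det_submatrix_equiv_self, Matrix.det_blockDiagonal, Fintype.prod_sum_type]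
  simp only [M, Sum.elim_inl, Sum.elim_inr, Fin.prod_univ_two]
  push_cast
  have e1 := h2 z₁
  have e2 := h2 z₂
  push_cast at e1 e2
  rw [← e1, ← e2]
  simp
  ring

lemma bandDensity_eq (n W : ℕ) (H : Fin n → Fin n → ℂ) :
    bandDensity n W H = (∏ j, ∏ k, (Real.pi * Jmat n W j k))⁻¹ *
      Real.exp (-formH (Jmat n W) H H) := by
  rw [formH_self, bandDensity]
  simp only [Finset.prod_mul_distrib, Finset.prod_inv_distrib, ← Real.exp_sum]
  congr 2
  simp only [neg_div, Finset.sum_neg_distrib]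

lemma Theta_eq_gaussE (n W : ℕ) (z₁ z₂ : ℂ) (hJ : ∀ j k, 0 < Jmat n W j k) :
    (Theta n W z₁ z₂ : ℂ) =
      gaussE (X1 n) (formH (Jmat n W)) volume (formH_pos _ hJ) (detPoly (Dbig n z₁ z₂)) := by
  rw [gaussE_apply, Theta, ← integral_complex_ofReal, integral_complex_ofReal (f := fun v =>
    Real.exp (-formH (Jmat n W) v v)), gauss_ZH _ hJ, div_eq_mul_inv, ← integral_mul_const]
  congr 1
  funext H
  rw [eval_detPoly, X1_apply, det_x1, bandDensity_eq]
  push_cast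
  ring

lemma Theta_eq (N W : ℕ) (hN : 1 ≤ N) (hW : 1 ≤ W) (z₁ z₂ : ℂ) :
    (Theta (N + 1) W z₁ z₂ : ℂ) =
      (((Real.pi ^ (4 * (N + 1)))⁻¹ * ((Jmat (N + 1) W).det ^ 4)⁻¹ : ℝ) : ℂ) *
      ∫ Q : Fin (N + 1) → M2, (Real.exp (-formQ (Amat N W) Q Q) : ℂ) *
        ∏ j, (Qcal z₁ z₂ (Matrix.of (Q j))).det := by
  rw [Theta_eq_gaussE _ _ _ _ (J_pos N W hN hW)]
  rw [gauss_unique (w1 (Jmat (N + 1) W)) (w2 (Jmat (N + 1) W)) _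
    (gaussE (X2 (N + 1)) (formQ (Amat N W)) volume (formQ_pos _ (Amat_posDef N W hN)))
    ?_ ?_ (stein1 _ (J_pos N W hN hW))
    (stein2 _ _ (Amat_posDef N W hN) (Amat_symm N W hN) (J_symm N W hN) (A_mul_J N W hN)) _
    (gLap_eq _ (J_symm N W hN) _)]
  · rw [gaussE_apply, integral_complex_ofReal (f := fun v =>
      Real.exp (-formQ (Amat N W) v v)), gauss_Z _ (Amat_posDef N W hN), div_eq_inv_mul, J_det,
      ← Complex.ofReal_inv]
    congr 1
    · congr 1
      rw [mul_inv, inv_pow]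
    · congr 1
      funext Q
      rw [eval_detPoly, X2_apply, det_x2, mul_comm]
  · rw [gaussE_apply]
    simp only [map_one, one_mul]
    apply div_self
    rw [integral_complex_ofReal (f := fun v => Real.exp (-formH (Jmat (N + 1) W) v v)),
      gauss_ZH _ (J_pos N W hN hW)]
    have : 0 < ∏ j, ∏ k, (Real.pi * Jmat (N + 1) W j k) :=
      Finset.prod_pos fun j _ => Finset.prod_pos fun k _ =>
        mul_pos Real.pi_pos (J_pos N W hN hW j k)
    exact_mod_cast this.ne'
  · rw [gaussE_apply]
    simp only [map_one, one_mul]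
    apply div_self
    rw [integral_complex_ofReal (f := fun v =>
      Real.exp (-formQ (Amat N W) v v)), gauss_Z _ (Amat_posDef N W hN)]
    have := (Amat_posDef N W hN).det_pos
    have h : 0 < Real.pi ^ (4 * (N + 1)) * ((Amat N W).det ^ 4)⁻¹ := by positivity
    exact_mod_cast h.ne'
end partG

section partP

lemma fubini_cons {E : Type*} [MeasureSpace E] [SigmaFinite (volume : Measure E)] (m : ℕ)
    (F : (Fin (m + 1) → E) → ℂ) (hF : Integrable F) :
    ∫ P, F P = ∫ y : E, ∫ Q : Fin m → E, F (Fin.cons y Q) := by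
  have hmp := (volume_preserving_piFinSuccAbove (fun _ : Fin (m + 1) => E) 0).symm
  have he : ∀ p : E × (Fin m → E),
      (MeasurableEquiv.piFinSuccAbove (fun _ : Fin (m + 1) => E) 0).symm p = Fin.cons p.1 p.2 := by
    intro p
    simp [MeasurableEquiv.piFinSuccAbove]
    rfl
  have h1 := hmp.integral_comp' F
  have h2 : Integrable (fun p : E × (Fin m → E) => F (Fin.cons p.1 p.2))
      ((volume : Measure E).prod (volume : Measure (Fin m → E))) := by
    have := hmp.integrable_comp_of_integrable hF
    refine this.congr (Eventually.of_forall fun p => ?_)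
    simp only [Function.comp, he]
  rw [← h1]
  simp only [he]
  exact integral_prod _ h2

section chain
variable {E : Type*} [MeasureSpace E] [SigmaFinite (volume : Measure E)]
  (k : E → E → ℂ) (g : E → ℂ) (M : E → ℝ) (c : ℝ)

/-- the chain integrand -/
def chainF (m : ℕ) (P : Fin (m + 1) → E) : ℂ :=
  (∏ j : Fin m, k (P j.castSucc) (P j.succ)) * g (P (Fin.last m))

lemma chainF_cons (m : ℕ) (x : E) (P : Fin (m + 1) → E) :
    chainF k g (m + 1) (Fin.cons x P) = k x (P 0) * chainF k g m P := by
  unfold chainF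
  rw [Fin.prod_univ_succ, ← mul_assoc]
  simp only [Fin.castSucc_zero, Fin.cons_zero, Fin.cons_succ, ← Fin.succ_castSucc, ← Fin.succ_last]

lemma chainF_bound (hM : ∀ x, 0 ≤ M x) (hc : 0 ≤ c) (hk : ∀ x y, ‖k x y‖ ≤ c * M x * M y)
    (hg : ∀ x, ‖g x‖ ≤ M x) (m : ℕ) (P : Fin (m + 1) → E) :
    ‖chainF k g m P‖ ≤ c ^ m * M (P 0) * ∏ j : Fin m, M (P j.succ) ^ 2 := by
  unfold chainF
  rw [norm_mul, norm_prod]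
  calc _ ≤ (∏ j : Fin m, c * M (P j.castSucc) * M (P j.succ)) * M (P (Fin.last m)) := by
        apply mul_le_mul (Finset.prod_le_prod (fun _ _ => norm_nonneg _) fun j _ => hk _ _) (hg _)
          (norm_nonneg _)
        exact Finset.prod_nonneg fun j _ => mul_nonneg (mul_nonneg hc (hM _)) (hM _)
    _ = c ^ m * ((∏ j : Fin m, M (P j.castSucc)) * M (P (Fin.last m))) * ∏ j : Fin m, M (P j.succ) := by
        rw [Finset.prod_mul_distrib, Finset.prod_mul_distrib]
        simp only [Finset.prod_const, Finset.card_univ, Fintype.card_fin]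
        ring
    _ = _ := by
        rw [← Fin.prod_univ_castSucc (fun j => M (P j)), Fin.prod_univ_succ, Finset.prod_pow]
        ring

lemma chainF_meas (hkm : Measurable (Function.uncurry k)) (hgm : Measurable g) (m : ℕ) :
    Measurable (chainF k g m) := by
  unfold chainF
  refine Measurable.mul (Finset.measurable_prod _ fun j _ => ?_) (hgm.comp (measurable_pi_apply _))
  have h : Measurable fun P : Fin (m + 1) → E => (P j.castSucc, P j.succ) := by fun_prop
  exact hkm.comp h

lemma cons_meas (m : ℕ) (x : E) : Measurable (fun Q : Fin m → E => (Fin.cons x Q : Fin (m + 1) → E)) := by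
  refine measurable_pi_iff.2 fun j => ?_
  refine Fin.cases ?_ (fun j => ?_) j
  · simp
  · simpa using measurable_pi_apply j

lemma chainF_integrable (hM : ∀ x, 0 ≤ M x) (hc : 0 ≤ c) (hk : ∀ x y, ‖k x y‖ ≤ c * M x * M y)
    (hg : ∀ x, ‖g x‖ ≤ M x) (hkm : Measurable (Function.uncurry k)) (hgm : Measurable g)
    (hintg : Integrable fun x => M x ^ 2) (m : ℕ) (x : E) :
    Integrable fun Q : Fin m → E => chainF k g m (Fin.cons x Q) := by
  have h1 : Integrable (fun Q : Fin m → E => c ^ m * M x * ∏ j : Fin m, M (Q j) ^ 2) :=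
    (Integrable.fintype_prod (f := fun _ : Fin m => fun x : E => M x ^ 2) fun _ => hintg).const_mul _
  refine h1.mono' ((chainF_meas k g hkm hgm m).comp (cons_meas m x)).aestronglyMeasurable ?_
  refine Eventually.of_forall fun Q => ?_
  simpa using chainF_bound k g M c hM hc hk hg m (Fin.cons x Q)

lemma iterate_chain (hM : ∀ x, 0 ≤ M x) (hc : 0 ≤ c) (hk : ∀ x y, ‖k x y‖ ≤ c * M x * M y)
    (hg : ∀ x, ‖g x‖ ≤ M x) (hkm : Measurable (Function.uncurry k)) (hgm : Measurable g)
    (hintg : Integrable fun x => M x ^ 2) (m : ℕ) : ∀ x : E,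
    ((fun (h : E → ℂ) (x : E) => ∫ y, k x y * h y)^[m] g) x =
      ∫ Q : Fin m → E, chainF k g m (Fin.cons x Q) := by
  induction m with
  | zero =>
    intro x
    have : (volume : Measure (Fin 0 → E)) = Measure.dirac (fun i => i.elim0) := by
      rw [volume_pi, Measure.pi_of_empty]
      congr 1
    rw [this]
    simp [chainF]
  | succ m ih =>
    intro x
    rw [Function.iterate_succ_apply']
    simp only [ih]
    rw [fubini_cons m _ (chainF_integrable k g M c hM hc hk hg hkm hgm hintg (m + 1) x)]
    congr 1
    funext y
    rw [← integral_const_mul]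
    congr 1
    funext Q
    rw [chainF_cons, Fin.cons_zero]

lemma chain_pairing (hM : ∀ x, 0 ≤ M x) (hc : 0 ≤ c) (hk : ∀ x y, ‖k x y‖ ≤ c * M x * M y)
    (hg : ∀ x, ‖g x‖ ≤ M x) (hkm : Measurable (Function.uncurry k)) (hgm : Measurable g)
    (hintg : Integrable fun x => M x ^ 2) (m : ℕ) :
    ∫ x, ((fun (h : E → ℂ) (x : E) => ∫ y, k x y * h y)^[m] g) x * g x =
      ∫ P : Fin (m + 1) → E, g (P 0) * chainF k g m P := by
  have h1 : Integrable (fun P : Fin (m + 1) → E => c ^ m * ∏ j : Fin (m + 1), M (P j) ^ 2) :=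
    (Integrable.fintype_prod (f := fun _ : Fin (m + 1) => fun x : E => M x ^ 2)
      fun _ => hintg).const_mul _
  have h2 : Integrable (fun P : Fin (m + 1) → E => g (P 0) * chainF k g m P) := by
    refine h1.mono' ((hgm.comp (measurable_pi_apply _)).mul
      (chainF_meas k g hkm hgm m)).aestronglyMeasurable ?_
    refine Eventually.of_forall fun P => ?_
    rw [norm_mul]
    calc _ ≤ M (P 0) * (c ^ m * M (P 0) * ∏ j : Fin m, M (P j.succ) ^ 2) :=
          mul_le_mul (hg _) (chainF_bound k g M c hM hc hk hg m P) (norm_nonneg _) (hM _)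
      _ = _ := by
          rw [Fin.prod_univ_succ]
          ring
  rw [fubini_cons m _ h2]
  congr 1
  funext x
  rw [iterate_chain k g M c hM hc hk hg hkm hgm hintg m x, mul_comm, ← integral_const_mul]
  simp
end chain

end partP

section partR

/-- sum of squared entries -/
def sq2 (Q : M2) : ℝ := ∑ a, ∑ b, ‖Q a b‖ ^ 2

lemma sq2_nonneg (Q : M2) : 0 ≤ sq2 Q :=
  Finset.sum_nonneg fun _ _ => Finset.sum_nonneg fun _ _ => sq_nonneg _

lemma trace_sq (Q : Matrix (Fin 2) (Fin 2) ℂ) : (Q * Qᴴ).trace = ((sq2 Q : ℝ) : ℂ) := by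
  unfold sq2
  simp only [Matrix.trace, Matrix.diag, Matrix.mul_apply, Matrix.conjTranspose_apply]
  push_cast
  refine Finset.sum_congr rfl fun a _ => Finset.sum_congr rfl fun b _ => ?_
  exact Complex.mul_conj' _

lemma sq2_ge (Q : M2) : ‖Q‖ ^ 2 ≤ sq2 Q := by
  have h : ‖Q‖ ≤ Real.sqrt (sq2 Q) := by
    refine (pi_norm_le_iff_of_nonneg (Real.sqrt_nonneg _)).2 fun a =>
      (pi_norm_le_iff_of_nonneg (Real.sqrt_nonneg _)).2 fun b => ?_
    apply Real.le_sqrt_of_sq_le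
    unfold sq2
    refine le_trans ?_ (Finset.single_le_sum (f := fun a => ∑ b, ‖Q a b‖ ^ 2)
      (fun _ _ => Finset.sum_nonneg fun _ _ => sq_nonneg _) (Finset.mem_univ a))
    exact Finset.single_le_sum (f := fun b => ‖Q a b‖ ^ 2) (fun _ _ => sq_nonneg _) (Finset.mem_univ b)
  calc ‖Q‖ ^ 2 ≤ Real.sqrt (sq2 Q) ^ 2 := pow_le_pow_left₀ (norm_nonneg _) h 2
    _ = sq2 Q := Real.sq_sqrt (sq2_nonneg Q)

lemma Qcal_cont (z₁ z₂ : ℂ) : Continuous fun Q : M2 => (Qcal z₁ z₂ (Matrix.of Q)).det := by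
  refine Continuous.matrix_det ?_
  refine continuous_matrix fun i j => ?_
  rcases i with i | i <;> rcases j with j | j <;>
    simp only [Qcal, Matrix.fromBlocks_apply₁₁, Matrix.fromBlocks_apply₁₂, Matrix.fromBlocks_apply₂₁,
      Matrix.fromBlocks_apply₂₂, Matrix.smul_apply, Matrix.of_apply, Matrix.conjTranspose_apply] <;>
    fun_prop

lemma sq2_cont : Continuous sq2 := by
  unfold sq2
  fun_prop

lemma Qcal_entry (z₁ z₂ : ℂ) (Q : M2) (i j) :
    ‖Qcal z₁ z₂ (Matrix.of Q) i j‖ ≤ (1 + ‖z₁‖ + ‖z₂‖) * (1 + ‖Q‖) := by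
  have hQ : ∀ a b, ‖Q a b‖ ≤ ‖Q‖ := fun a b => (norm_le_pi_norm (Q a) b).trans (norm_le_pi_norm Q a)
  have h1 := norm_nonneg z₁
  have h2 := norm_nonneg z₂
  have h3 := norm_nonneg Q
  have hA : ∀ x : ℝ, x ≤ ‖Q‖ → x ≤ (1 + ‖z₁‖ + ‖z₂‖) * (1 + ‖Q‖) := by
    intro x hx
    nlinarith [mul_nonneg h1 h3, mul_nonneg h2 h3]
  have hB : ∀ x : ℝ, x ≤ ‖z₁‖ + ‖z₂‖ → x ≤ (1 + ‖z₁‖ + ‖z₂‖) * (1 + ‖Q‖) := by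
    intro x hx
    nlinarith [mul_nonneg h1 h3, mul_nonneg h2 h3]
  rcases i with i | i <;> rcases j with j | j
  · apply hB
    fin_cases i <;> fin_cases j <;> simp [Qcal, Matrix.diagonal] <;> positivity
  · apply hA
    simpa [Qcal] using hQ i j
  · apply hA
    simpa [Qcal] using hQ j i
  · apply hB
    fin_cases i <;> fin_cases j <;> simp [Qcal, Matrix.diagonal] <;> positivity

lemma Qcal_det_bound (z₁ z₂ : ℂ) (Q : M2) :
    ‖(Qcal z₁ z₂ (Matrix.of Q)).det‖ ≤ 24 * ((1 + ‖z₁‖ + ‖z₂‖) * (1 + ‖Q‖)) ^ 4 := by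
  have := Matrix.det_le (abv := NormedField.toAbsoluteValue ℂ) (A := Qcal z₁ z₂ (Matrix.of Q))
    (x := (1 + ‖z₁‖ + ‖z₂‖) * (1 + ‖Q‖)) (fun i j => Qcal_entry z₁ z₂ Q i j)
  simp [Nat.factorial] at this
  exact this

/-- the weight -/
def gQ (z z₁ z₂ : ℂ) (Q : M2) : ℂ := Complex.exp (fQ z z₁ z₂ (Matrix.of Q))

lemma gQ_meas (z z₁ z₂ : ℂ) : Measurable (gQ z z₁ z₂) := by
  unfold gQ fQ
  refine Complex.measurable_exp.comp (measurable_const.mul ?_)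
  refine Measurable.add (Measurable.add (Measurable.neg ?_) ?_) measurable_const
  · simp only [trace_sq]
    exact (Complex.continuous_ofReal.comp sq2_cont).measurable
  · exact Complex.measurable_log.comp (Qcal_cont z₁ z₂).measurable

lemma gQ_sq (z z₁ z₂ : ℂ) (Q : M2) (h : (Qcal z₁ z₂ (Matrix.of Q)).det ≠ 0) :
    gQ z z₁ z₂ Q ^ 2 = (Real.exp (-sq2 Q) : ℂ) * (Qcal z₁ z₂ (Matrix.of Q)).det *
      (Real.exp (2 * ustar z ^ 2) : ℂ) := by
  unfold gQ fQ
  rw [← Complex.exp_nat_mul, trace_sq]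
  have : ((2 : ℕ) : ℂ) * (1 / 2 * (-((sq2 (Matrix.of Q) : ℝ) : ℂ) + Complex.log (Qcal z₁ z₂ (Matrix.of Q)).det
      + 2 * (ustar z : ℂ) ^ 2)) = -((sq2 Q : ℝ) : ℂ) + Complex.log (Qcal z₁ z₂ (Matrix.of Q)).det
      + 2 * (ustar z : ℂ) ^ 2 := by
    push_cast
    have : sq2 (Matrix.of Q) = sq2 Q := rfl
    rw [this]
    ring
  rw [this, Complex.exp_add, Complex.exp_add, Complex.exp_log h]
  push_cast
  rfl

lemma gQ_norm_sq (z z₁ z₂ : ℂ) (Q : M2) :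
    ‖gQ z z₁ z₂ Q‖ ^ 2 ≤ Real.exp (-sq2 Q) * (1 + ‖(Qcal z₁ z₂ (Matrix.of Q)).det‖) *
      Real.exp (2 * ustar z ^ 2) := by
  by_cases h : (Qcal z₁ z₂ (Matrix.of Q)).det = 0
  · unfold gQ fQ
    rw [trace_sq, h]
    have hh : (1 / 2 * (-((sq2 (Matrix.of Q) : ℝ) : ℂ) + Complex.log 0
      + 2 * (ustar z : ℂ) ^ 2)) = ((1 / 2 * (-sq2 Q + 2 * ustar z ^ 2) : ℝ) : ℂ) := by
      have : sq2 (Matrix.of Q) = sq2 Q := rfl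
      rw [this]
      push_cast
      simp
    rw [hh, Complex.norm_exp_ofReal, ← Real.exp_nat_mul]
    simp only [norm_zero, add_zero, mul_one, ← Real.exp_add]
    apply le_of_eq
    congr 1
    push_cast
    ring
  · rw [← norm_pow, gQ_sq _ _ _ _ h, norm_mul, norm_mul, Complex.norm_real, Complex.norm_real,
      Real.norm_of_nonneg (Real.exp_pos _).le, Real.norm_of_nonneg (Real.exp_pos _).le]
    gcongr
    linarith

lemma gQ_int (z z₁ z₂ : ℂ) : Integrable fun Q : M2 => ‖gQ z z₁ z₂ Q‖ ^ 2 := by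
  refine integrable_gauss_growth (volume : Measure M2) _
    ((gQ_meas z z₁ z₂).norm.pow_const 2).aestronglyMeasurable
    ((1 + 24 * (1 + ‖z₁‖ + ‖z₂‖) ^ 4) * Real.exp (2 * ustar z ^ 2)) 1 one_pos 4 fun Q => ?_
  rw [Real.norm_of_nonneg (sq_nonneg _)]
  refine (gQ_norm_sq z z₁ z₂ Q).trans ?_
  have h1 := Qcal_det_bound z₁ z₂ Q
  have h2 : (1 : ℝ) ≤ (1 + ‖Q‖) ^ 4 := one_le_pow₀ (by linarith [norm_nonneg Q])
  have h3 : Real.exp (-sq2 Q) ≤ Real.exp (-(1 * ‖Q‖ ^ 2)) := by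
    apply Real.exp_le_exp.2
    linarith [sq2_ge Q]
  have h4 : 1 + ‖(Qcal z₁ z₂ (Matrix.of Q)).det‖ ≤
      (1 + 24 * (1 + ‖z₁‖ + ‖z₂‖) ^ 4) * (1 + ‖Q‖) ^ 4 := by
    rw [mul_pow] at h1
    linarith
  calc _ ≤ Real.exp (-(1 * ‖Q‖ ^ 2)) * ((1 + 24 * (1 + ‖z₁‖ + ‖z₂‖) ^ 4) * (1 + ‖Q‖) ^ 4) *
        Real.exp (2 * ustar z ^ 2) := by gcongr
    _ = _ := by ring

/-- prefactor -/
def cW (W : ℕ) (z : ℂ) : ℝ := Real.pi ^ 4 * (W : ℝ) ^ 4 * ((lamstar W z) ^ 2)⁻¹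

lemma cW_nonneg (W : ℕ) (z : ℂ) : 0 ≤ cW W z := by
  unfold cW
  positivity

lemma Kker_eq (W : ℕ) (z z₁ z₂ : ℂ) (Q Q' : M2) :
    Kker W z z₁ z₂ (Matrix.of Q) (Matrix.of Q') = (cW W z : ℂ) *
      (Real.exp (-((W : ℝ) ^ 2 * sq2 (Q - Q'))) : ℂ) * gQ z z₁ z₂ Q * gQ z z₁ z₂ Q' := by
  unfold Kker gQ cW
  rw [trace_sq, Complex.exp_add, Complex.exp_add]
  have : sq2 (Matrix.of Q - Matrix.of Q') = sq2 (Q - Q') := rfl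
  rw [this]
  push_cast
  rw [neg_mul]
  ring

lemma Kker_bound (W : ℕ) (z z₁ z₂ : ℂ) (Q Q' : M2) :
    ‖Kker W z z₁ z₂ (Matrix.of Q) (Matrix.of Q')‖ ≤ cW W z * ‖gQ z z₁ z₂ Q‖ * ‖gQ z z₁ z₂ Q'‖ := by
  rw [Kker_eq, norm_mul, norm_mul, norm_mul, Complex.norm_real, Complex.norm_real,
    Real.norm_of_nonneg (Real.exp_pos _).le, Real.norm_of_nonneg (cW_nonneg W z)]
  have : Real.exp (-((W : ℝ) ^ 2 * sq2 (Q - Q'))) ≤ 1 := by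
    apply Real.exp_le_one_iff.2
    have := mul_nonneg (sq_nonneg (W : ℝ)) (sq2_nonneg (Q - Q'))
    linarith
  have h := mul_le_mul_of_nonneg_left this (cW_nonneg W z)
  rw [mul_one] at h
  gcongr

lemma Kker_meas (W : ℕ) (z z₁ z₂ : ℂ) : Measurable (Function.uncurry fun Q Q' : M2 =>
    Kker W z z₁ z₂ (Matrix.of Q) (Matrix.of Q')) := by
  have : (Function.uncurry fun Q Q' : M2 => Kker W z z₁ z₂ (Matrix.of Q) (Matrix.of Q')) =
      fun p : M2 × M2 => (cW W z : ℂ) *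
      (Real.exp (-((W : ℝ) ^ 2 * sq2 (p.1 - p.2))) : ℂ) * gQ z z₁ z₂ p.1 * gQ z z₁ z₂ p.2 := by
    funext p
    exact Kker_eq W z z₁ z₂ p.1 p.2
  rw [this]
  have h1 : Continuous fun p : M2 × M2 => (cW W z : ℂ) *
      (Real.exp (-((W : ℝ) ^ 2 * sq2 (p.1 - p.2))) : ℂ) := by
    have := sq2_cont
    fun_prop
  exact (h1.measurable.mul ((gQ_meas z z₁ z₂).comp measurable_fst)).mul
    ((gQ_meas z z₁ z₂).comp measurable_snd)

lemma part2 (N W : ℕ) (z z₁ z₂ : ℂ) :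
    ∫ Q : M2, ((Kop W z z₁ z₂)^[N] (gQ z z₁ z₂)) Q * gQ z z₁ z₂ Q =
    ∫ Q : Fin (N + 1) → M2, gQ z z₁ z₂ (Q 0) *
      (∏ j : Fin N, Kker W z z₁ z₂ (Matrix.of (Q j.castSucc)) (Matrix.of (Q j.succ))) *
      gQ z z₁ z₂ (Q (Fin.last N)) := by
  have := chain_pairing (fun Q Q' : M2 => Kker W z z₁ z₂ (Matrix.of Q) (Matrix.of Q')) (gQ z z₁ z₂)
    (fun Q => ‖gQ z z₁ z₂ Q‖) (cW W z) (fun _ => norm_nonneg _) (cW_nonneg W z)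
    (Kker_bound W z z₁ z₂) (fun _ => le_rfl) (Kker_meas W z z₁ z₂) (gQ_meas z z₁ z₂)
    (gQ_int z z₁ z₂) N
  simp only [mul_assoc]
  exact this

end partR

section partS

lemma det_line_ne (z₁ z₂ : ℂ) (Q : M2) :
    ∀ᵐ t : ℝ, (Qcal z₁ z₂ (Matrix.of (Q + t • (fun a b => if a = b then (1 : ℂ) else 0)))).det ≠ 0 := by
  set K : Matrix (Fin 2 ⊕ Fin 2) (Fin 2 ⊕ Fin 2) ℂ :=
    Matrix.fromBlocks 0 (Complex.I • 1) (Complex.I • 1) 0 with hK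
  set M0 := Qcal z₁ z₂ (Matrix.of Q) with hM0
  have hKK : K * K = -1 := by
    rw [hK, Matrix.fromBlocks_multiply]
    simp only [Matrix.mul_zero, Matrix.zero_mul, zero_add, add_zero, Matrix.smul_mul, Matrix.mul_smul,
      Matrix.mul_one, smul_smul, Complex.I_mul_I]
    rw [← Matrix.fromBlocks_one, Matrix.fromBlocks_neg]
    simp
  have hdK : K.det ≠ 0 := by
    intro h
    have := congrArg Matrix.det hKK
    rw [Matrix.det_mul, h, Matrix.det_neg, Matrix.det_one] at this
    simp at this
    norm_num at this
  have hq : ∀ t : ℝ, Qcal z₁ z₂ (Matrix.of (Q + t • (fun a b => if a = b then (1 : ℂ) else 0))) =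
      M0 + (t : ℂ) • K := by
    intro t
    rw [hM0, hK]
    ext i j
    rcases i with i | i <;> rcases j with j | j <;>
      simp [Qcal, Matrix.one_apply, mul_add]
    · ring
    · by_cases h : i = j
      · subst h
        simp
        ring
      · simp [h, Ne.symm h]
  have hdet : ∀ t : ℝ, (M0 + (t : ℂ) • K).det = K.det * (K * M0).charpoly.eval (t : ℂ) := by
    intro t
    rw [Matrix.eval_charpoly, ← Matrix.det_mul]
    congr 1
    rw [Matrix.mul_sub, ← Matrix.mul_assoc, hKK, Matrix.scalar_apply, ← Matrix.smul_one_eq_diagonal]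
    simp [add_comm]
  have hfin : Set.Finite {t : ℝ | (K * M0).charpoly.eval (t : ℂ) = 0} := by
    have h1 : Set.Finite {w : ℂ | (K * M0).charpoly.IsRoot w} :=
      Polynomial.finite_setOfPred_isRoot (Matrix.charpoly_monic _).ne_zero
    exact h1.preimage Complex.ofReal_injective.injOn
  have := hfin.measure_zero (volume : Measure ℝ)
  filter_upwards [measure_eq_zero_iff_ae_notMem.1 this] with t ht
  rw [hq, hdet]
  exact mul_ne_zero hdK ht

lemma ae_det_ne (z₁ z₂ : ℂ) : ∀ᵐ Q : M2, (Qcal z₁ z₂ (Matrix.of Q)).det ≠ 0 := by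
  have hs : MeasurableSet {Q : M2 | (Qcal z₁ z₂ (Matrix.of Q)).det ≠ 0} :=
    (isOpen_ne.preimage (Qcal_cont z₁ z₂)).measurableSet
  have := ae_mem_of_ae_add_linearMap_mem
    (LinearMap.toSpanSingleton ℝ M2 (fun a b => if a = b then (1 : ℂ) else 0))
    (volume : Measure ℝ) (volume : Measure M2) hs (fun Q => det_line_ne z₁ z₂ Q)
  exact this

lemma ae_det_ne_all (n : ℕ) (z₁ z₂ : ℂ) :
    ∀ᵐ Q : Fin n → M2, ∀ j, (Qcal z₁ z₂ (Matrix.of (Q j))).det ≠ 0 := by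
  rw [ae_all_iff]
  intro j
  exact (Measure.tendsto_eval_ae_ae (μ := fun _ : Fin n => (volume : Measure M2)) (i := j)).eventually
    (ae_det_ne z₁ z₂)

lemma integrand_eq (N W : ℕ) (hN : 1 ≤ N) (z z₁ z₂ : ℂ) (Q : Fin (N + 1) → M2)
    (hQ : ∀ j, (Qcal z₁ z₂ (Matrix.of (Q j))).det ≠ 0) :
    gQ z z₁ z₂ (Q 0) *
      (∏ j : Fin N, Kker W z z₁ z₂ (Matrix.of (Q j.castSucc)) (Matrix.of (Q j.succ))) *
      gQ z z₁ z₂ (Q (Fin.last N)) =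
    ((cW W z ^ N * Real.exp (2 * ustar z ^ 2) ^ (N + 1) : ℝ) : ℂ) *
      ((Real.exp (-formQ (Amat N W) Q Q) : ℂ) * ∏ j, (Qcal z₁ z₂ (Matrix.of (Q j))).det) := by
  simp only [Kker_eq, Finset.prod_mul_distrib]
  have h1 : gQ z z₁ z₂ (Q 0) * ∏ j : Fin N, gQ z z₁ z₂ (Q j.succ) = ∏ j, gQ z z₁ z₂ (Q j) :=
    (Fin.prod_univ_succ fun j => gQ z z₁ z₂ (Q j)).symm
  have h2 : (∏ j : Fin N, gQ z z₁ z₂ (Q j.castSucc)) * gQ z z₁ z₂ (Q (Fin.last N)) =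
      ∏ j, gQ z z₁ z₂ (Q j) := (Fin.prod_univ_castSucc fun j => gQ z z₁ z₂ (Q j)).symm
  have h3 : (∏ j, gQ z z₁ z₂ (Q j)) ^ 2 = (∏ j, (Real.exp (-sq2 (Q j)) : ℂ)) *
      (∏ j, (Qcal z₁ z₂ (Matrix.of (Q j))).det) * (Real.exp (2 * ustar z ^ 2) : ℂ) ^ (N + 1) := by
    rw [← Finset.prod_pow, Finset.prod_congr rfl fun j _ => gQ_sq z z₁ z₂ (Q j) (hQ j)]
    rw [Finset.prod_mul_distrib, Finset.prod_mul_distrib]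
    simp
  have h4 : Real.exp (-formQ (Amat N W) Q Q) = (∏ j, Real.exp (-sq2 (Q j))) *
      ∏ l : Fin N, Real.exp (-((W : ℝ) ^ 2 * sq2 (Q l.castSucc - Q l.succ))) := by
    rw [formQ_A N W hN, ← Real.exp_sum, ← Real.exp_sum, ← Real.exp_add, Finset.sum_neg_distrib,
      Finset.sum_neg_distrib, ← Finset.mul_sum, neg_add]
    rfl
  rw [h4]
  push_cast
  push_cast at h3
  simp only [Finset.prod_const, Finset.card_univ, Fintype.card_fin]
  linear_combination ((cW W z : ℂ) ^ N *
    (∏ l : Fin N, Complex.exp (-((W : ℂ) ^ 2 * (sq2 (Q l.castSucc - Q l.succ) : ℂ))))) *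
    (h3 + h1 * ((∏ j : Fin N, gQ z z₁ z₂ (Q j.castSucc)) * gQ z z₁ z₂ (Q (Fin.last N))) +
      (∏ j, gQ z z₁ z₂ (Q j)) * h2)

lemma part1 (N W : ℕ) (hN : 1 ≤ N) (hW : 1 ≤ W) (z z₁ z₂ : ℂ) :
    (ThetaTilde (N + 1) W z z₁ z₂ : ℂ) =
    ∫ Q : Fin (N + 1) → M2, gQ z z₁ z₂ (Q 0) *
      (∏ j : Fin N, Kker W z z₁ z₂ (Matrix.of (Q j.castSucc)) (Matrix.of (Q j.succ))) *
      gQ z z₁ z₂ (Q (Fin.last N)) := by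
  have h := integral_congr_ae (μ := (volume : Measure (Fin (N + 1) → M2)))
    ((ae_det_ne_all (N + 1) z₁ z₂).mono fun Q hQ => integrand_eq N W hN z z₁ z₂ Q hQ)
  rw [h, integral_const_mul]
  unfold ThetaTilde
  rw [Complex.ofReal_mul, Theta_eq N W hN hW z₁ z₂, ← mul_assoc]
  congr 1
  have hd : (Jmat (N + 1) W).det ≠ 0 := by
    rw [J_det]
    exact inv_ne_zero (Amat_posDef N W hN).det_pos.ne'
  have key : (Real.pi ^ 2 * (W : ℝ) ^ 2 * (lamstar W z)⁻¹) ^ (2 * (N + 1 - 1)) *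
      (CNW (N + 1) W z)⁻¹ * ((Real.pi ^ (4*(N+1)))⁻¹ * ((Jmat (N+1) W).det ^ 4)⁻¹) =
      cW W z ^ N * Real.exp (2 * ustar z ^ 2) ^ (N + 1) := by
    have e1 : (Real.pi ^ 2 * (W : ℝ) ^ 2 * (lamstar W z)⁻¹) ^ (2 * (N + 1 - 1)) = cW W z ^ N := by
      rw [Nat.add_sub_cancel, pow_mul]
      congr 1
      unfold cW
      rw [← inv_pow]
      ring
    have e2 : Real.exp (-2 * ((N + 1 : ℕ) : ℝ) * ustar z ^ 2) =
        (Real.exp (2 * ustar z ^ 2) ^ (N + 1))⁻¹ := by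
      rw [← Real.exp_nat_mul, ← Real.exp_neg]
      congr 1
      ring
    rw [e1]
    unfold CNW
    rw [e2]
    have p : (Real.pi ^ (4 * (N + 1))) ≠ 0 := pow_ne_zero _ Real.pi_ne_zero
    have q : (Jmat (N + 1) W).det ^ 4 ≠ 0 := pow_ne_zero _ hd
    have r : Real.exp (2 * ustar z ^ 2) ^ (N + 1) ≠ 0 := pow_ne_zero _ (Real.exp_pos _).ne'
    simp only [mul_inv, inv_inv]
    generalize (Real.pi ^ (4 * (N + 1))) = P at *
    generalize (Jmat (N + 1) W).det ^ 4 = D at *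
    field_simp
  have := congrArg (fun x : ℝ => (x : ℂ)) key
  push_cast at this ⊢
  exact this

end partS

/-- Proposition 2.1 of the paper: the transfer-operator
representation of the normalized second correlation function of characteristic
polynomials: for `N + 1` sites,
`Θ̃(z₁,z₂) = ∫ e^{f(Q₁)} ∏_{j=1}^{N} 𝒦_ζ(Q_j,Q_{j+1}) e^{f(Q_{N+1})} ∏ dQ_j
          = (𝒦_ζ^N g, g)` with `g = e^f`. -/
theorem transfer_operator_representation
    (N W : ℕ) (z ζ : ℂ) (hz : ‖z‖ < 1) (hN : 1 ≤ N) (hW : 1 ≤ W) :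
    (ThetaTilde (N + 1) W z (z + ζ / (Real.sqrt (N + 1) : ℂ))
        (z - ζ / (Real.sqrt (N + 1) : ℂ)) : ℂ) =
      (∫ Q : Fin (N + 1) → Fin 2 → Fin 2 → ℂ,
        Complex.exp (fQ z (z + ζ / (Real.sqrt (N + 1) : ℂ))
            (z - ζ / (Real.sqrt (N + 1) : ℂ)) (Matrix.of (Q 0))) *
        (∏ j : Fin N,
          Kker W z (z + ζ / (Real.sqrt (N + 1) : ℂ)) (z - ζ / (Real.sqrt (N + 1) : ℂ))
            (Matrix.of (Q j.castSucc)) (Matrix.of (Q j.succ))) *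
        Complex.exp (fQ z (z + ζ / (Real.sqrt (N + 1) : ℂ))
            (z - ζ / (Real.sqrt (N + 1) : ℂ)) (Matrix.of (Q (Fin.last N))))) ∧
    (ThetaTilde (N + 1) W z (z + ζ / (Real.sqrt (N + 1) : ℂ))
        (z - ζ / (Real.sqrt (N + 1) : ℂ)) : ℂ) =
      ∫ Q : Fin 2 → Fin 2 → ℂ,
        ((Kop W z (z + ζ / (Real.sqrt (N + 1) : ℂ)) (z - ζ / (Real.sqrt (N + 1) : ℂ)))^[N]
          (fun Q' => Complex.exp (fQ z (z + ζ / (Real.sqrt (N + 1) : ℂ))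
            (z - ζ / (Real.sqrt (N + 1) : ℂ)) (Matrix.of Q')))) Q *
        Complex.exp (fQ z (z + ζ / (Real.sqrt (N + 1) : ℂ))
            (z - ζ / (Real.sqrt (N + 1) : ℂ)) (Matrix.of Q)) := by
  exact ⟨part1 N W hN hW z _ _, (part1 N W hN hW z _ _).trans (part2 N W z _ _).symm⟩

end
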